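/- Fix δ > 0 and ε > 0. Then there exist η > 0 and n₀ such that for all n ≥ n₀ and all integers M, k with M/N ∈ [δ, 1−δ] and k/n ∈ [δ, 1−δ], with probability at least 1 − exp(−n^η) over G = G_{n,M} the following holds: for all z ∈ ℝ, |P_S(e(S) ≤ z) − P(Z ≤ z)| ≤ n^{−1/4+ε}, where S is a uniformly random k-element subset of [n] and Z is a normal random variable with mean K·M/N and variance λ·n². -/

import Mathlib

/-!
Write `κ = K/N` and, for a graph `G` and a `k`-set `S`, let `W_S(G) = ∑_{e ∈ G} (1_{e ⊆ S} - κ)`.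
If `G` has `M` edges, then `W_S(G) = e(S) - K·M/N`. The proof studies the smoothed distribution
function `F_z(G) = E_S Φ((z - W_S(G)) / √v)` (`smoothCdf`) as a function of the random graph.

*Concentration.* First let the edges be independent with probability `p = M/N`. The discrete
derivative of `F_z` at an edge `e` is, up to terms of order `1/v`, the correlation over `S` of
`1_{e ⊆ S} - κ` with a function bounded by `1/√v`. The covariance matrix of the centred indicators
`1_{e ⊆ S} - κ` has absolute row sums at most `4n` (`row_sum_le`): its signed row sums vanish, the
covariance with `e` is the same for all edges disjoint from `e`, and only `O(n)` edges meet `e`.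
Almost orthogonality (`gram_bound`) then bounds the squared gradient of `F_z` by `9n/v`
(`gradient_bound`). The Efron–Stein inequality applied to `exp(θF_z/2)`, iterated by halving `θ`,
turns this into exponential concentration of `F_z` at scale `√(n/v)` (`concentration`).

*Mean.* Averaging over `G` before `S` leaves, for each `S`, a sum of independent variables, and
the Lindeberg method shows that `E F_z` is within `O(N v^(-3/2))` of
`Φ(z / √(v + p(1-p)K(1-κ)))` (`lindeberg`, `mean_smoothCdf`). The variance `p(1-p)K(1-κ)` equals
`λn²` up to `O(n)` (`variance_approx`).

*Fixing the number of edges.* Exactly `M` edges occur with probability at least `1/(N+1)`, so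
passing to `G_{n,M}` costs a factor `N + 1` (`card_slice_le`). As `e(S)` is an integer in `[0, M]`,
a union bound over `O(N)` values of `z` suffices (`slice_union`, `cdf_bound_all`).

*Removing the smoothing.* Shifting `z` by `±r` with `r = n^(ε/2) √v` sandwiches the distribution
function of `e(S)` between smoothed ones (`cdf_bound_at`). With `v = n^(3/2)` the errors `√(n/v)`,
`N v^(-3/2)`, `v/n²` and `√v/n` are all `O(n^(-1/4))`, up to the factor `n^(ε/2)`
(`error_bound`).
-/

open Finset MeasureTheory ProbabilityTheory

noncomputable section

/-- Uniform probability of an event `P` over a finite sample space `Ω`. -/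
def Pru {α : Type*} (Ω : Finset α) (P : α → Prop) : ℝ := by
  classical exact ((Ω.filter P).card : ℝ) / Ω.card

/-- Expectation of `f` under the uniform distribution on `Ω`. -/
def Exu {α : Type*} (Ω : Finset α) (f : α → ℝ) : ℝ := (∑ a ∈ Ω, f a) / Ω.card

/-- Variance of `f` under the uniform distribution on `Ω`. -/
def Varu {α : Type*} (Ω : Finset α) (f : α → ℝ) : ℝ := Exu Ω (fun a => (f a - Exu Ω f) ^ 2)

/-- Conditional expectation of `f` given the value of `g`, under uniform distribution on `Ω`. -/
def condExpU {α β : Type*} (Ω : Finset α) (f : α → ℝ) (g : α → β) (ω : α) : ℝ := by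
  classical exact Exu (Ω.filter (fun ω' => g ω' = g ω)) f

/-- The edge set of the complete graph on `[n]`. -/
def completeEdges (n : ℕ) : Finset (Sym2 (Fin n)) := by
  classical exact Finset.univ.filter (fun e => ¬ e.IsDiag)

/-- A finset of `Sym2`s is a graph if it has no loops. -/
def IsGraph {n : ℕ} (G : Finset (Sym2 (Fin n))) : Prop := ∀ e ∈ G, ¬ e.IsDiag

/-- The sample space of `G_{n,M}`: all graphs on `[n]` with exactly `M` edges. -/
def graphsM (n M : ℕ) : Finset (Finset (Sym2 (Fin n))) := by
  classical exact (completeEdges n).powerset.filter (fun G => G.card = M)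

/-- `e(S)`: number of edges of `G` with both endpoints in `S`. -/
def edgesIn {n : ℕ} (G : Finset (Sym2 (Fin n))) (S : Finset (Fin n)) : ℕ := by
  classical exact (G.filter (fun e => ∀ v ∈ e, v ∈ S)).card

/-- `d_S(v)`: number of neighbours of `v` (in graph `G`) lying in `S`. -/
def dS {n : ℕ} (G : Finset (Sym2 (Fin n))) (S : Finset (Fin n)) (v : Fin n) : ℕ := by
  classical exact (S.filter (fun w => s(v, w) ∈ G)).card

/-- All `k`-element subsets of `[n]`. -/
def kSets (n k : ℕ) : Finset (Finset (Fin n)) := Finset.univ.powersetCard k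

/-- Probability of an event under the uniform random graph `G_{n,M}`. -/
def PrGnM (n M : ℕ) (P : Finset (Sym2 (Fin n)) → Prop) : ℝ := Pru (graphsM n M) P

/-- Probability of an event under the binomial random graph `G_{n,p}`. -/
def PrGnp (n : ℕ) (p : ℝ) (P : Finset (Sym2 (Fin n)) → Prop) : ℝ := by
  classical exact ∑ G ∈ (completeEdges n).powerset,
    if (P G) then p ^ G.card * (1 - p) ^ ((completeEdges n).card - G.card) else 0

/-- `N = n(n-1)/2` as a real number. -/
def Nr (n : ℕ) : ℝ := (n : ℝ) * ((n : ℝ) - 1) / 2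

/-- `K = k(k-1)/2` as a real number. -/
def Kr (k : ℕ) : ℝ := (k : ℝ) * ((k : ℝ) - 1) / 2

/-- `λ = ((n²-k²)k²/(2n⁴))·(M(N-M)/N²)`. -/
def lamP (n M k : ℕ) : ℝ :=
  (((n:ℝ)^2 - (k:ℝ)^2) * (k:ℝ)^2 / (2 * (n:ℝ)^4)) * ((M:ℝ) * (Nr n - (M:ℝ)) / (Nr n)^2)

/-- The mean `K·M/N`. -/
def muP (n M k : ℕ) : ℝ := Kr k * (M:ℝ) / Nr n

/-- `W = (e(S) - K·M/N)/n`. -/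
def Wfun (n M k : ℕ) (G : Finset (Sym2 (Fin n))) (S : Finset (Fin n)) : ℝ :=
  ((edgesIn G S : ℝ) - muP n M k) / n

/-- `V = Σ_v d(v)² - n·d(G)²`, i.e. `n` times the degree variance. -/
def Vdeg {n : ℕ} (G : Finset (Sym2 (Fin n))) : ℝ :=
  (∑ v : Fin n, (dS G Finset.univ v : ℝ) ^ 2) - (n:ℝ) * (2 * (G.card : ℝ) / n) ^ 2

/-- Gaussian CDF with mean `m` and variance `v`. -/
def gaussCdf (m v z : ℝ) : ℝ := ((gaussianReal m v.toNNReal) (Set.Iic z)).toReal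

/-- Gaussian measure of a set, mean `m`, variance `v`. -/
def gaussMeas (m v : ℝ) (A : Set ℝ) : ℝ := ((gaussianReal m v.toNNReal) A).toReal

/-- Gaussian density with mean `m` and variance `v`. -/
def gaussPdf (m v x : ℝ) : ℝ := gaussianPDFReal m v.toNNReal x

/-- `P(Y ∈ ·)` for `Y ~ Bin(ν, p)`. -/
def binomPr (ν : ℕ) (p : ℝ) (P : ℕ → Prop) : ℝ := by
  classical exact ∑ j ∈ Finset.range (ν + 1),
    if (P j) then (ν.choose j : ℝ) * p ^ j * (1 - p) ^ (ν - j) else 0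

/-- Sample space for "uniform `k`-set `S`, then uniform `x ∈ S` and `x̄ ∈ S̄`". -/
def SwapΩ (n k : ℕ) : Finset (Σ _ : Finset (Fin n), Fin n × Fin n) :=
  (kSets n k).sigma (fun S => S ×ˢ Sᶜ)

/-- A triple `(a, r, t)` is valid for `β`. -/
def ValidTriple (β : ℝ) (n a r t : ℕ) : Prop :=
  a ≤ r ∧
  (∃ c : ℝ, 1/2 ≤ c ∧ c ≤ 1 ∧ (a : ℝ) = c * (t:ℝ) ^ ((3:ℝ)/2) * (n:ℝ) ^ (2*β - 1/2)) ∧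
  (r : ℝ) ≤ (n:ℝ) ^ (-β) * Real.sqrt ((n:ℝ) * (t:ℝ))

/-! ### The Gaussian distribution function -/

/-- The standard normal density. -/
def phi (x : ℝ) : ℝ := gaussianPDFReal 0 1 x

/-- The standard normal distribution function. -/
def Phi (x : ℝ) : ℝ := gaussCdf 0 1 x

lemma phi_eq (x : ℝ) : phi x = (√(2 * Real.pi))⁻¹ * Real.exp (-x ^ 2 / 2) := by
  simp [phi, gaussianPDFReal]

lemma phi_nonneg (x : ℝ) : 0 ≤ phi x := gaussianPDFReal_nonneg _ _ _

/-- Polynomials of degree at most four, suitably small, are dominated by `1 / phi`. This bounds the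
derivatives of `Phi` that enter the Taylor remainders. -/
lemma phi_mul_le {x y : ℝ} (h : y ≤ 2 * (1 + x ^ 2 / 2 + x ^ 4 / 8)) : y * phi x ≤ 1 := by
  have h1 : 1 + x ^ 2 / 2 + x ^ 4 / 8 ≤ Real.exp (x ^ 2 / 2) := by
    have := Real.quadratic_le_exp_of_nonneg (x := x ^ 2 / 2) (by positivity)
    nlinarith
  have h2 : (2 : ℝ) ≤ √(2 * Real.pi) := by
    apply Real.le_sqrt_of_sq_le
    nlinarith [Real.pi_gt_three]
  have h3 : y ≤ √(2 * Real.pi) * Real.exp (x ^ 2 / 2) := by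
    refine h.trans ?_
    gcongr
  rw [phi_eq, neg_div, Real.exp_neg, ← mul_inv, ← div_eq_mul_inv]
  rw [div_le_one (by positivity)]
  exact h3

lemma phi_le_one (x : ℝ) : phi x ≤ 1 := by
  have := phi_mul_le (x := x) (y := 1) (by nlinarith [sq_nonneg x, sq_nonneg (x^2)])
  simpa using this

lemma abs_mul_phi_le (x : ℝ) : |x| * phi x ≤ 1 :=
  phi_mul_le (by rw [← sq_abs x]; nlinarith [sq_nonneg (|x| - 1), abs_nonneg x, sq_nonneg (x^2)])

lemma abs_sq_sub_one_mul_phi_le (x : ℝ) : |x ^ 2 - 1| * phi x ≤ 1 :=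
  phi_mul_le (by
    rcases abs_cases (x ^ 2 - 1) with ⟨h, _⟩ | ⟨h, _⟩ <;> rw [h] <;>
      nlinarith [sq_nonneg x, sq_nonneg (x ^ 2)])

lemma abs_cube_mul_phi_le (x : ℝ) : |x| ^ 3 * phi x ≤ 1 :=
  phi_mul_le (by
    have h4 : x ^ 4 = |x| ^ 4 := by rw [Even.pow_abs (by decide)]
    rw [← sq_abs x, h4]
    nlinarith [mul_nonneg (sq_nonneg (|x|)) (sq_nonneg (|x| - 2))])

lemma hasDerivAt_phi (x : ℝ) : HasDerivAt phi (-x * phi x) x := by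
  have h : HasDerivAt (fun x : ℝ => (√(2 * Real.pi))⁻¹ * Real.exp (-x ^ 2 / 2))
      ((√(2 * Real.pi))⁻¹ * (Real.exp (-x ^ 2 / 2) * (-(2 * x) / 2))) x := by
    have h0 : HasDerivAt (fun x : ℝ => -x ^ 2 / 2) (-(2 * x) / 2) x := by
      have := ((hasDerivAt_pow 2 x).neg).div_const 2
      simpa using this
    exact h0.exp.const_mul _
  rw [show phi = fun x : ℝ => (√(2 * Real.pi))⁻¹ * Real.exp (-x ^ 2 / 2) from funext phi_eq]
  convert h using 1
  ring

lemma continuous_phi : Continuous phi :=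
  continuous_iff_continuousAt.2 fun x => (hasDerivAt_phi x).continuousAt

lemma Phi_eq_integral (x : ℝ) : Phi x = ∫ y in Set.Iic x, phi y := by
  unfold Phi gaussCdf
  rw [Real.toNNReal_one, gaussianReal_apply_eq_integral _ (by simp), ENNReal.toReal_ofReal]
  · rfl
  · exact integral_nonneg fun y => gaussianPDFReal_nonneg _ _ _

lemma hasDerivAt_Phi (x : ℝ) : HasDerivAt Phi (phi x) x := by
  have hphi_int : Integrable phi := integrable_gaussianPDFReal 0 1
  have h : Phi = fun y => Phi 0 + ∫ t in (0 : ℝ)..y, phi t := by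
    funext y
    rw [Phi_eq_integral, Phi_eq_integral, ← intervalIntegral.integral_Iic_sub_Iic
      hphi_int.integrableOn hphi_int.integrableOn]
    ring
  rw [h]
  have := intervalIntegral.integral_hasDerivAt_right (f := phi) (a := 0) (b := x)
    (hphi_int.intervalIntegrable) (continuous_phi.stronglyMeasurableAtFilter _ _)
    continuous_phi.continuousAt
  exact this.const_add _

lemma gaussCdf_eq_Phi {m v z : ℝ} (hv : 0 < v) : gaussCdf m v z = Phi ((z - m) / √v) := by
  have hs : 0 < √v := Real.sqrt_pos.2 hv
  unfold Phi gaussCdf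
  have h1 : gaussianReal m v.toNNReal = (gaussianReal 0 1).map (fun x => √v * x + m) := by
    have h2 : (gaussianReal 0 1).map (fun x => √v * x) = gaussianReal 0 v.toNNReal := by
      rw [gaussianReal_map_const_mul]
      congr 1
      · simp
      · ext; simp [Real.sq_sqrt hv.le, hv.le]
    rw [show (fun x => √v * x + m) = (fun y => y + m) ∘ (fun x => √v * x) from rfl,
      ← Measure.map_map (by fun_prop) (by fun_prop), h2, gaussianReal_map_add_const]
    simp
  rw [h1, Measure.map_apply (by fun_prop) measurableSet_Iic, Real.toNNReal_one]
  congr 2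
  ext x
  simp only [Set.mem_preimage, Set.mem_Iic]
  rw [le_div_iff₀ hs]
  constructor <;> intro h <;> linarith

lemma Phi_nonneg (x : ℝ) : 0 ≤ Phi x := ENNReal.toReal_nonneg

lemma Phi_le_one (x : ℝ) : Phi x ≤ 1 := by
  unfold Phi gaussCdf
  exact measureReal_le_one

lemma Phi_mono : Monotone Phi :=
  monotone_of_hasDerivAt_nonneg hasDerivAt_Phi phi_nonneg

lemma one_sub_Phi_le {x : ℝ} (hx : 0 ≤ x) : 1 - Phi x ≤ Real.exp (-x ^ 2 / 2) := by
  have h := measure_ge_le_exp_mul_mgf (μ := gaussianReal 0 1) (X := id) x hx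
    (integrable_exp_mul_gaussianReal x)
  rw [mgf_id_gaussianReal, ← Real.exp_add] at h
  have h2 : 1 - Phi x = (gaussianReal 0 1).real (Set.Iic x)ᶜ := by
    rw [probReal_compl_eq_one_sub measurableSet_Iic]
    simp [Phi, gaussCdf, Measure.real]
  rw [h2]
  refine (measureReal_mono (fun y hy => ?_)).trans (h.trans (le_of_eq ?_))
  · simp only [Set.mem_compl_iff, Set.mem_Iic, not_le] at hy
    exact hy.le
  · congr 1
    simp only [NNReal.coe_one]
    ring

lemma Phi_neg_le {x : ℝ} (hx : 0 ≤ x) : Phi (-x) ≤ Real.exp (-x ^ 2 / 2) := by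
  have h := measure_le_le_exp_mul_mgf (μ := gaussianReal 0 1) (X := id) (t := -x) (-x)
    (by linarith) (integrable_exp_mul_gaussianReal _)
  rw [mgf_id_gaussianReal, ← Real.exp_add] at h
  have h2 : Phi (-x) = (gaussianReal 0 1).real {y | id y ≤ -x} := by
    simp [Phi, gaussCdf, Measure.real, Set.Iic]
  rw [h2]
  refine h.trans (le_of_eq ?_)
  congr 1
  simp only [NNReal.coe_one]
  ring

/-- The mean value inequality in the form used to run Taylor expansions: a bound of order `m` on
the derivative yields one of order `m + 1` on the function. -/
lemma abs_le_of_deriv_le {g g' : ℝ → ℝ} {s : Set ℝ} (hs : Convex ℝ s) (h0s : (0 : ℝ) ∈ s)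
    (h0 : g 0 = 0) (m : ℕ) (hd : ∀ y ∈ s, HasDerivAt g (g' y) y) (hb : ∀ y ∈ s, |g' y| ≤ |y| ^ m)
    {x : ℝ} (hx : x ∈ s) : |g x| ≤ |x| ^ (m + 1) := by
  have hseg : segment ℝ 0 x ⊆ s := hs.segment_subset h0s hx
  have := Convex.norm_image_sub_le_of_norm_hasDerivWithin_le (f := g) (f' := g') (C := |x| ^ m)
    (s := segment ℝ 0 x) (x := 0) (y := x)
    (fun y hy => (hd y (hseg hy)).hasDerivWithinAt) (fun y hy => ?_) (convex_segment _ _)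
    (left_mem_segment _ _ _) (right_mem_segment _ _ _)
  · simpa [h0, pow_succ] using this
  · refine (hb y (hseg hy)).trans ?_
    have : |y| ≤ |x| := by
      obtain ⟨a, b, ha, hb', hab, rfl⟩ := hy
      simp only [smul_eq_mul, mul_zero, zero_add, abs_mul, abs_of_nonneg hb']
      nlinarith [abs_nonneg x]
    gcongr

lemma hasDerivAt_mul_phi (x : ℝ) :
    HasDerivAt (fun x => x * phi x) ((1 - x ^ 2) * phi x) x := by
  exact ((hasDerivAt_id x).mul (hasDerivAt_phi x)).congr_deriv (by simp only [id]; ring)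

lemma Phi_taylor_two (a x : ℝ) : |Phi (a + x) - Phi a - phi a * x| ≤ |x| ^ 2 := by
  refine abs_le_of_deriv_le (g := fun x => Phi (a + x) - Phi a - phi a * x)
    (g' := fun x => phi (a + x) - phi a) convex_univ trivial (by simp) 1 (fun y _ => ?_)
    (fun y _ => ?_) trivial
  · have := (((hasDerivAt_Phi (a + y)).comp_const_add a y).sub_const (Phi a)).sub
      ((hasDerivAt_id y).const_mul (phi a))
    exact this.congr_deriv (by ring)
  · refine abs_le_of_deriv_le (g := fun x => phi (a + x) - phi a)
      (g' := fun x => -(a + x) * phi (a + x)) convex_univ trivial (by simp) 0 (fun y _ => ?_)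
      (fun y _ => ?_) trivial
    · simpa using ((hasDerivAt_phi (a + y)).comp_const_add a y).sub_const (phi a)
    · rw [abs_mul, abs_neg, abs_of_nonneg (phi_nonneg _)]
      simpa using abs_mul_phi_le _

lemma Phi_taylor_three (a x : ℝ) :
    |Phi (a + x) - Phi a - phi a * x + a * phi a * x ^ 2 / 2| ≤ |x| ^ 3 := by
  refine abs_le_of_deriv_le
    (g := fun x => Phi (a + x) - Phi a - phi a * x + a * phi a * x ^ 2 / 2)
    (g' := fun x => phi (a + x) - phi a + a * phi a * x) convex_univ trivial (by simp) 2
    (fun y _ => ?_) (fun y _ => ?_) trivial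
  · have := ((((hasDerivAt_Phi (a + y)).comp_const_add a y).sub_const (Phi a)).sub
      ((hasDerivAt_id y).const_mul (phi a))).add
      (((hasDerivAt_pow 2 y).const_mul (a * phi a)).div_const 2)
    exact this.congr_deriv (by
      simp only [mul_one, Nat.cast_ofNat, Nat.add_one_sub_one, pow_one]; ring)
  · refine abs_le_of_deriv_le (g := fun x => phi (a + x) - phi a + a * phi a * x)
      (g' := fun x => -((a + x) * phi (a + x)) + a * phi a) convex_univ trivial (by simp) 1
      (fun y _ => ?_) (fun y _ => ?_) trivial
    · have := (((hasDerivAt_phi (a + y)).comp_const_add a y).sub_const (phi a)).add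
        ((hasDerivAt_id y).const_mul (a * phi a))
      exact this.congr_deriv (by ring)
    · refine abs_le_of_deriv_le (g := fun x => -((a + x) * phi (a + x)) + a * phi a)
        (g' := fun x => -((1 - (a + x) ^ 2) * phi (a + x))) convex_univ trivial (by simp) 0
        (fun y _ => ?_) (fun y _ => ?_) trivial
      · exact ((hasDerivAt_mul_phi (a + y)).comp_const_add a y).neg.add_const _
      · rw [abs_neg, abs_mul, abs_of_nonneg (phi_nonneg _), abs_sub_comm]
        simpa using abs_sq_sub_one_mul_phi_le _

lemma Phi_lipschitz (x y : ℝ) : |Phi x - Phi y| ≤ |x - y| := by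
  have := abs_le_of_deriv_le (g := fun t => Phi (y + t) - Phi y) (g' := fun t => phi (y + t))
    convex_univ trivial (by simp) 0
    (fun t _ => ((hasDerivAt_Phi (y + t)).comp_const_add y t).sub_const _)
    (fun t _ => by simpa [abs_of_nonneg (phi_nonneg _)] using phi_le_one _)
    (x := x - y) trivial
  simpa using this

/-- The curve `τ ↦ a / √(1 + τ)` along which the variance parameter moves. -/
lemma hasDerivAt_div_sqrt (a : ℝ) {τ : ℝ} (hτ : 0 ≤ τ) :
    HasDerivAt (fun τ => a / √(1 + τ)) (-(a / √(1 + τ)) / (2 * (1 + τ))) τ := by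
  have h1 : 0 < 1 + τ := by linarith
  have hs : √(1 + τ) ≠ 0 := (Real.sqrt_pos.2 h1).ne'
  have h2 : HasDerivAt (fun τ : ℝ => √(1 + τ)) (1 / (2 * √(1 + τ))) τ :=
    ((hasDerivAt_id τ).const_add 1).sqrt h1.ne'
  have h3 := (hasDerivAt_const τ a).div h2 hs
  have h4 : √(1 + τ) ^ 2 = 1 + τ := Real.sq_sqrt h1.le
  refine h3.congr_deriv ?_
  rw [h4]
  field_simp
  ring

lemma Phi_var_lipschitz (a : ℝ) {τ : ℝ} (hτ : 0 ≤ τ) : |Phi (a / √(1 + τ)) - Phi a| ≤ τ := by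
  have := abs_le_of_deriv_le (g := fun τ => Phi (a / √(1 + τ)) - Phi a)
    (g' := fun τ => phi (a / √(1 + τ)) * (-(a / √(1 + τ)) / (2 * (1 + τ))))
    (convex_Ici (0 : ℝ)) (by simp) (by simp) 0
    (fun t ht => ((hasDerivAt_Phi _).comp t (hasDerivAt_div_sqrt a ht)).sub_const _)
    (fun t ht => ?_) (x := τ) hτ
  · simpa [abs_of_nonneg hτ] using this
  · have ht' : (0 : ℝ) ≤ t := ht
    set x := a / √(1 + t)
    have h1 : |phi x * (-x / (2 * (1 + t)))| = |x| * phi x / (2 * (1 + t)) := by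
      rw [abs_mul, abs_div, abs_neg, abs_of_nonneg (phi_nonneg _),
        abs_of_nonneg (by positivity : 0 ≤ 2 * (1 + t))]
      ring
    rw [h1, pow_zero, div_le_one (by positivity)]
    linarith [abs_mul_phi_le x]

/-- First order expansion of `Phi` in the relative variance increment `τ`. The linear term is the
one produced by the second order term of `Phi_taylor_three` for a centred perturbation of variance
`τ` (the heat equation). -/
lemma Phi_var_taylor (a : ℝ) {τ : ℝ} (hτ : 0 ≤ τ) :
    |Phi (a / √(1 + τ)) - Phi a + τ * (a * phi a) / 2| ≤ τ ^ 2 := by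
  have := abs_le_of_deriv_le (g := fun τ => Phi (a / √(1 + τ)) - Phi a + τ * (a * phi a) / 2)
    (g' := fun τ => phi (a / √(1 + τ)) * (-(a / √(1 + τ)) / (2 * (1 + τ))) + (a * phi a) / 2)
    (convex_Ici (0 : ℝ)) (by simp) (by simp) 1
    (fun t ht => ?_) (fun t ht => ?_) (x := τ) hτ
  · simpa [abs_of_nonneg hτ] using this
  · have := (((hasDerivAt_Phi _).comp t (hasDerivAt_div_sqrt a ht)).sub_const (Phi a)).add
      (((hasDerivAt_id t).mul_const (a * phi a)).div_const 2)
    exact this.congr_deriv (by ring)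
  · refine abs_le_of_deriv_le
      (g := fun τ => phi (a / √(1 + τ)) * (-(a / √(1 + τ)) / (2 * (1 + τ))) + (a * phi a) / 2)
      (g' := fun τ => ((1 - (a / √(1 + τ)) ^ 2) * phi (a / √(1 + τ)) *
          (-(a / √(1 + τ)) / (2 * (1 + τ))) * (-1 / (2 * (1 + τ)))
        + (a / √(1 + τ)) * phi (a / √(1 + τ)) * (1 / (2 * (1 + τ) ^ 2))))
      (convex_Ici (0 : ℝ)) (by simp) (by simp; ring) 0
      (fun t ht => ?_) (fun t ht => ?_) ht
    · have ht' : (0 : ℝ) ≤ t := ht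
      have h1 : (1 + t) ≠ 0 := by positivity
      have e1 := (hasDerivAt_mul_phi _).comp t (hasDerivAt_div_sqrt a ht')
      have e2 : HasDerivAt (fun t : ℝ => -1 / (2 * (1 + t))) (1 / (2 * (1 + t) ^ 2)) t := by
        have := (hasDerivAt_const t (-1 : ℝ)).div
          (((hasDerivAt_id t).const_add 1).const_mul 2) (by simp; exact h1)
        exact this.congr_deriv (by simp only [id]; field_simp; ring)
      have e3 := (e1.mul e2).add_const ((a * phi a) / 2)
      refine (e3.congr_deriv ?_).congr_of_eventuallyEq (Filter.Eventually.of_forall fun s => ?_)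
      · rfl
      · simp only [Pi.mul_apply, Function.comp]
        ring
    · have ht' : (0 : ℝ) ≤ t := ht
      set x := a / √(1 + t)
      have hp := phi_nonneg x
      have hr : 1 / (1 + t) ≤ 1 := by rw [div_le_one (by positivity)]; linarith
      have hr0 : 0 ≤ 1 / (1 + t) := by positivity
      have hr2 : (1 / (1 + t)) ^ 2 ≤ 1 := pow_le_one₀ hr0 hr
      have e : (1 - x ^ 2) * phi x * (-x / (2 * (1 + t))) * (-1 / (2 * (1 + t)))
          + x * phi x * (1 / (2 * (1 + t) ^ 2))
          = (1 / (1 + t)) ^ 2 * ((3 / 4) * (x * phi x) - (1 / 4) * (x ^ 3 * phi x)) := by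
        field_simp; ring
      rw [e, abs_mul, abs_of_nonneg (by positivity), pow_zero]
      have b1 : |x * phi x| ≤ 1 := by
        rw [abs_mul, abs_of_nonneg hp]; exact abs_mul_phi_le x
      have b3 : |x ^ 3 * phi x| ≤ 1 := by
        rw [abs_mul, abs_of_nonneg hp, abs_pow]; exact abs_cube_mul_phi_le x
      have b : |(3 / 4) * (x * phi x) - (1 / 4) * (x ^ 3 * phi x)| ≤ 1 := by
        rw [abs_le] at *
        constructor <;> linarith
      nlinarith [abs_nonneg ((3 / 4) * (x * phi x) - (1 / 4) * (x ^ 3 * phi x))]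

/-! ### Independent edges: Efron–Stein inequality and concentration -/

section Bernoulli
set_option linter.unusedSectionVars false
variable {α : Type*} [DecidableEq α]

/-- Expectation of `F` over the random subset of `s` that contains each element independently with
probability `p`. -/
def bexp (p : ℝ) (s : Finset α) (F : Finset α → ℝ) : ℝ :=
  ∑ G ∈ s.powerset, p ^ G.card * (1 - p) ^ (s.card - G.card) * F G

/-- The discrete derivative of `F` in the coordinate `e`. -/
def dd (e : α) (F : Finset α → ℝ) (G : Finset α) : ℝ := F (insert e G) - F (G.erase e)

lemma bexp_empty (p : ℝ) (F : Finset α → ℝ) : bexp p ∅ F = F ∅ := by simp [bexp]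

lemma bexp_insert (p : ℝ) {a : α} {s : Finset α} (ha : a ∉ s) (F : Finset α → ℝ) :
    bexp p (insert a s) F = (1 - p) * bexp p s F + p * bexp p s (fun G => F (insert a G)) := by
  unfold bexp
  rw [sum_powerset_insert ha, mul_sum, mul_sum]
  congr 1 <;> refine sum_congr rfl fun G hG => ?_
  · have h1 : G.card ≤ s.card := card_le_card (mem_powerset.1 hG)
    rw [card_insert_of_notMem ha, Nat.sub_add_comm h1, pow_succ]
    ring
  · have h2 : a ∉ G := fun h => ha (mem_powerset.1 hG h)
    rw [card_insert_of_notMem ha, card_insert_of_notMem h2, Nat.add_sub_add_right, pow_succ]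
    ring

lemma bexp_add (p : ℝ) (s : Finset α) (F H : Finset α → ℝ) :
    bexp p s (fun G => F G + H G) = bexp p s F + bexp p s H := by
  simp only [bexp, mul_add, sum_add_distrib]

lemma bexp_const_mul (p : ℝ) (s : Finset α) (c : ℝ) (F : Finset α → ℝ) :
    bexp p s (fun G => c * F G) = c * bexp p s F := by
  simp only [bexp, mul_sum]
  exact sum_congr rfl fun _ _ => by ring

lemma bexp_const (p : ℝ) (s : Finset α) (c : ℝ) : bexp p s (fun _ => c) = c := by
  unfold bexp
  rw [← sum_mul, sum_pow_mul_eq_add_pow]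
  simp

lemma bexp_sum {ι : Type*} (p : ℝ) (s : Finset α) (t : Finset ι) (F : ι → Finset α → ℝ) :
    bexp p s (fun G => ∑ i ∈ t, F i G) = ∑ i ∈ t, bexp p s (F i) := by
  simp only [bexp, mul_sum]
  exact sum_comm

variable {p : ℝ}

lemma bexp_mono (hp0 : 0 ≤ p) (hp1 : p ≤ 1) {s : Finset α} {F H : Finset α → ℝ}
    (h : ∀ G ⊆ s, F G ≤ H G) : bexp p s F ≤ bexp p s H := by
  refine sum_le_sum fun G hG => ?_
  have : 0 ≤ 1 - p := by linarith
  exact mul_le_mul_of_nonneg_left (h G (mem_powerset.1 hG)) (by positivity)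

lemma bexp_sq_le (hp0 : 0 ≤ p) (hp1 : p ≤ 1) (s : Finset α) (F : Finset α → ℝ) :
    (bexp p s F) ^ 2 ≤ bexp p s (fun G => F G ^ 2) := by
  have h := bexp_mono hp0 hp1 (s := s) (F := fun _ => 0)
    (H := fun G => F G ^ 2 + ((-2 * bexp p s F) * F G + (bexp p s F) ^ 2))
    (fun G _ => by nlinarith [sq_nonneg (F G - bexp p s F)])
  rw [bexp_const, bexp_add, bexp_add, bexp_const_mul, bexp_const] at h
  nlinarith

lemma dd_insert {a e : α} (h : e ≠ a) (F : Finset α → ℝ) (G : Finset α) :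
    dd e F (insert a G) = dd e (fun G => F (insert a G)) G := by
  unfold dd
  rw [insert_comm, erase_insert_of_ne h.symm]

/-- The Efron–Stein (Poincaré) inequality for independent Bernoulli variables. -/
lemma efron_stein (hp0 : 0 ≤ p) (hp1 : p ≤ 1) (s : Finset α) (F : Finset α → ℝ) :
    bexp p s (fun G => F G ^ 2) - (bexp p s F) ^ 2
      ≤ p * (1 - p) * ∑ e ∈ s, bexp p s (fun G => dd e F G ^ 2) := by
  induction s using Finset.induction_on generalizing F with
  | empty => simp [bexp_empty]
  | insert a s ha ih =>
    have i0 := ih F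
    have i1 := ih (fun G => F (insert a G))
    have hq : 0 ≤ 1 - p := by linarith
    have hd : (bexp p s (fun G => F (insert a G)) - bexp p s F) ^ 2
        ≤ bexp p (insert a s) (fun G => dd a F G ^ 2) := by
      have h1 : bexp p s (fun G => F (insert a G)) - bexp p s F
          = bexp p s (fun G => F (insert a G) + (-1) * F G) := by
        rw [bexp_add, bexp_const_mul]; ring
      have h2 : bexp p s (fun G => (F (insert a G) + (-1) * F G) ^ 2)
          ≤ bexp p s (fun G => dd a F G ^ 2) := by
        refine bexp_mono hp0 hp1 fun G hG => le_of_eq ?_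
        have : a ∉ G := fun h => ha (hG h)
        simp only [dd, erase_eq_of_notMem this]; ring
      have h3 : bexp p s (fun G => (F (insert a G) + (-1) * F G) ^ 2)
          ≤ bexp p s (fun G => dd a F (insert a G) ^ 2) := by
        refine bexp_mono hp0 hp1 fun G hG => le_of_eq ?_
        have : a ∉ G := fun h => ha (hG h)
        simp only [dd, erase_insert this, insert_idem]; ring
      rw [h1, bexp_insert p ha]
      have h4 := bexp_sq_le hp0 hp1 s (fun G => F (insert a G) + (-1) * F G)
      nlinarith
    have hs : ∑ e ∈ s, bexp p (insert a s) (fun G => dd e F G ^ 2)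
        = (1 - p) * ∑ e ∈ s, bexp p s (fun G => dd e F G ^ 2)
          + p * ∑ e ∈ s, bexp p s (fun G => dd e (fun G => F (insert a G)) G ^ 2) := by
      rw [mul_sum, mul_sum, ← sum_add_distrib]
      refine sum_congr rfl fun e he => ?_
      have hea : e ≠ a := fun h => ha (h ▸ he)
      rw [bexp_insert p ha]
      simp only [dd_insert hea]
    rw [sum_insert ha, hs, bexp_insert p ha, bexp_insert p ha]
    have hpq : 0 ≤ p * (1 - p) := mul_nonneg hp0 hq
    have j0 := mul_le_mul_of_nonneg_left i0 hq
    have j1 := mul_le_mul_of_nonneg_left i1 hp0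
    have jd := mul_le_mul_of_nonneg_left hd hpq
    nlinarith

/-- Self-improvement of the Laplace transform: the Efron–Stein inequality for `exp (θ H / 2)`. -/
lemma laplace_step (hp0 : 0 ≤ p) (hp1 : p ≤ 1) (s : Finset α) (H : Finset α → ℝ) {V θ : ℝ}
    (hV : ∀ G ⊆ s, ∑ e ∈ s, dd e H G ^ 2 ≤ V) (hθ : θ ^ 2 * V ≤ 1) :
    bexp p s (fun G => Real.exp (θ * H G)) * (1 - θ ^ 2 * V / 4)
      ≤ (bexp p s (fun G => Real.exp (θ / 2 * H G))) ^ 2 := by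
  have key : ∀ G ⊆ s, ∑ e ∈ s, dd e (fun G => Real.exp (θ / 2 * H G)) G ^ 2
      ≤ θ ^ 2 * V * Real.exp (θ * H G) := by
    intro G hG
    have h1 : ∀ e ∈ s, dd e (fun G => Real.exp (θ / 2 * H G)) G ^ 2
        ≤ θ ^ 2 * Real.exp (θ * H G) * dd e H G ^ 2 := by
      intro e he
      have hle : (θ * dd e H G) ^ 2 ≤ 1 := by
        rw [mul_pow]
        refine le_trans ?_ hθ
        exact mul_le_mul_of_nonneg_left ((single_le_sum (f := fun e => dd e H G ^ 2)
          (fun _ _ => sq_nonneg _) he).trans (hV G hG)) (sq_nonneg _)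
      have hle' : |θ * dd e H G| ≤ 1 := by
        rwa [sq_le_one_iff_abs_le_one] at hle
      have hexp : Real.exp (θ * H G) = Real.exp (θ / 2 * H G) ^ 2 := by
        rw [← Real.exp_nat_mul]; congr 1; push_cast; ring
      -- both cases reduce to this bound, with `y = ± θ * dd e H G / 2`
      have main : ∀ y : ℝ, |y| = |θ * dd e H G| / 2 →
          (Real.exp (θ / 2 * H G) * (Real.exp y - 1)) ^ 2
            ≤ θ ^ 2 * Real.exp (θ * H G) * dd e H G ^ 2 := by
        intro y hy
        have hy1 : |y| ≤ 1 := by rw [hy]; linarith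
        have h2 := Real.abs_exp_sub_one_le hy1
        have h3 : (Real.exp y - 1) ^ 2 ≤ (θ * dd e H G) ^ 2 := by
          rw [sq_le_sq]
          linarith
        rw [mul_pow, ← hexp]
        calc Real.exp (θ * H G) * (Real.exp y - 1) ^ 2
            ≤ Real.exp (θ * H G) * (θ * dd e H G) ^ 2 :=
              mul_le_mul_of_nonneg_left h3 (Real.exp_pos _).le
          _ = _ := by ring
      by_cases heG : e ∈ G
      · have h4 := main (-(θ * dd e H G) / 2) (by rw [abs_div, abs_neg]; simp)
        refine le_trans (le_of_eq ?_) h4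
        rw [mul_sub, ← Real.exp_add, ← neg_sq]
        simp only [dd, insert_eq_of_mem heG]
        ring_nf
      · have h4 := main ((θ * dd e H G) / 2) (by rw [abs_div]; simp)
        refine le_trans (le_of_eq ?_) h4
        rw [mul_sub, ← Real.exp_add]
        simp only [dd, erase_eq_of_notMem heG]
        ring_nf
    calc _ ≤ ∑ e ∈ s, θ ^ 2 * Real.exp (θ * H G) * dd e H G ^ 2 := sum_le_sum h1
      _ = θ ^ 2 * Real.exp (θ * H G) * ∑ e ∈ s, dd e H G ^ 2 := by rw [mul_sum]
      _ ≤ θ ^ 2 * Real.exp (θ * H G) * V :=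
          mul_le_mul_of_nonneg_left (hV G hG) (by positivity)
      _ = _ := by ring
  have es := efron_stein hp0 hp1 s (fun G => Real.exp (θ / 2 * H G))
  rw [← bexp_sum] at es
  have h5 := bexp_mono hp0 hp1 key
  rw [bexp_const_mul] at h5
  have h6 : (fun G => Real.exp (θ / 2 * H G) ^ 2) = fun G => Real.exp (θ * H G) := by
    funext G
    rw [← Real.exp_nat_mul]; congr 1; push_cast; ring
  rw [h6] at es
  have hpq : p * (1 - p) ≤ 1 / 4 := by nlinarith [sq_nonneg (p - 1 / 2)]
  have h7 : 0 ≤ bexp p s (fun G => ∑ e ∈ s, dd e (fun G => Real.exp (θ / 2 * H G)) G ^ 2) := by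
    have := bexp_mono hp0 hp1 (s := s) (F := fun _ => 0)
      (H := fun G => ∑ e ∈ s, dd e (fun G => Real.exp (θ / 2 * H G)) G ^ 2)
      (fun G _ => sum_nonneg fun _ _ => sq_nonneg _)
    rwa [bexp_const] at this
  nlinarith [mul_le_mul_of_nonneg_right hpq h7]

/-- Iterating `laplace_step` halves `θ` until `θ ≤ 1`, where `exp x ≤ 1 + x + x ^ 2` applies.
The contributions `θ ^ 2 * V / 2, θ ^ 2 * V / 4, …` of the successive halvings sum to at most
`θ ^ 2 * V`, and the initial error is reduced to `θ ^ 2 / 2 ^ j`. -/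
lemma laplace_bound_aux (hp0 : 0 ≤ p) (hp1 : p ≤ 1) (s : Finset α) (H : Finset α → ℝ) {V : ℝ}
    (hV0 : 0 ≤ V) (hV : ∀ G ⊆ s, ∑ e ∈ s, dd e H G ^ 2 ≤ V) (hm : bexp p s H = 0)
    (hH : ∀ G ⊆ s, |H G| ≤ 1) (j : ℕ) :
    ∀ θ : ℝ, 0 ≤ θ → θ ≤ 2 ^ j → θ ^ 2 * V ≤ 1 →
      bexp p s (fun G => Real.exp (θ * H G)) ≤ Real.exp (θ ^ 2 * V + θ ^ 2 / 2 ^ j) := by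
  induction j with
  | zero =>
    intro θ h0 h1 _
    have h1' : θ ≤ 1 := by simpa using h1
    have h2 : bexp p s (fun G => Real.exp (θ * H G))
        ≤ bexp p s (fun G => (1 + θ ^ 2) + θ * H G) := by
      refine bexp_mono hp0 hp1 fun G hG => ?_
      have hx : |θ * H G| ≤ 1 := by
        rw [abs_mul, abs_of_nonneg h0]
        exact mul_le_one₀ h1' (abs_nonneg _) (hH G hG)
      have h3 := Real.abs_exp_sub_one_sub_id_le hx
      have h4 : (θ * H G) ^ 2 ≤ θ ^ 2 := by
        rw [mul_pow, ← sq_abs (H G)]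
        have : |H G| ^ 2 ≤ 1 := pow_le_one₀ (abs_nonneg _) (hH G hG)
        nlinarith [sq_nonneg θ]
      linarith [(abs_le.1 h3).2]
    rw [bexp_add, bexp_const, bexp_const_mul, hm] at h2
    have h3 := Real.add_one_le_exp (θ ^ 2 * V + θ ^ 2 / 2 ^ 0)
    have : 0 ≤ θ ^ 2 * V := by positivity
    simp only [pow_zero, div_one] at h3 ⊢
    linarith
  | succ j ih =>
    intro θ h0 h1 h2
    have hx0 : 0 ≤ θ ^ 2 * V := by positivity
    have i := ih (θ / 2) (by positivity) (by rw [pow_succ] at h1; linarith) (by nlinarith)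
    have st := laplace_step hp0 hp1 s H hV h2
    have hpos : 0 < 1 - θ ^ 2 * V / 4 := by linarith
    have h3 : 1 ≤ Real.exp (θ ^ 2 * V / 2) * (1 - θ ^ 2 * V / 4) := by
      have := Real.add_one_le_exp (θ ^ 2 * V / 2)
      nlinarith
    have hL : 0 ≤ bexp p s (fun G => Real.exp (θ / 2 * H G)) := by
      have := bexp_mono hp0 hp1 (s := s) (F := fun _ => 0)
        (H := fun G => Real.exp (θ / 2 * H G)) (fun G _ => (Real.exp_pos _).le)
      rwa [bexp_const] at this
    have h4 : (bexp p s (fun G => Real.exp (θ / 2 * H G))) ^ 2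
        ≤ Real.exp (θ ^ 2 * V / 2 + θ ^ 2 / 2 ^ (j + 1)) := by
      refine (pow_le_pow_left₀ hL i 2).trans (le_of_eq ?_)
      rw [← Real.exp_nat_mul]
      congr 1
      push_cast
      rw [pow_succ]
      field_simp
      ring
    have h5 : Real.exp (θ ^ 2 * V + θ ^ 2 / 2 ^ (j + 1))
        = Real.exp (θ ^ 2 * V / 2 + θ ^ 2 / 2 ^ (j + 1)) * Real.exp (θ ^ 2 * V / 2) := by
      rw [← Real.exp_add]; congr 1; ring
    rw [h5]
    have h6 := st.trans h4
    set A := Real.exp (θ ^ 2 * V / 2 + θ ^ 2 / 2 ^ (j + 1))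
    have hA : 0 < A := Real.exp_pos _
    refine le_of_mul_le_mul_right (h6.trans ?_) hpos
    nlinarith

/-- Exponential concentration: if the discrete gradient of `F` has squared Euclidean norm at most
`V` everywhere, then `F` deviates from its mean by `x * √V` with probability `O(exp (-x))`. -/
lemma concentration (hp0 : 0 ≤ p) (hp1 : p ≤ 1) (s : Finset α) (F : Finset α → ℝ) {V : ℝ}
    (hV0 : 0 < V) (hV : ∀ G ⊆ s, ∑ e ∈ s, dd e F G ^ 2 ≤ V)
    (hF0 : ∀ G, 0 ≤ F G) (hF1 : ∀ G, F G ≤ 1) (x : ℝ) :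
    bexp p s (fun G => if x * √V ≤ F G - bexp p s F then 1 else 0) ≤ Real.exp (2 - x) := by
  set m := bexp p s F with hm
  have hs : 0 < √V := Real.sqrt_pos.2 hV0
  have hm0 : 0 ≤ m := by
    have := bexp_mono hp0 hp1 (s := s) (F := fun _ => 0) (H := F) (fun G _ => hF0 G)
    rwa [bexp_const] at this
  have hm1 : m ≤ 1 := by
    have := bexp_mono hp0 hp1 (s := s) (H := fun _ => 1) (F := F) (fun G _ => hF1 G)
    rwa [bexp_const] at this
  have hθ : (1 / √V) ^ 2 * V = 1 := by
    rw [div_pow, Real.sq_sqrt hV0.le]; field_simp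
  obtain ⟨j, hj⟩ := pow_unbounded_of_one_lt (max (1 / √V) ((1 / √V) ^ 2)) (one_lt_two)
  have hL := laplace_bound_aux hp0 hp1 s (fun G => F G - m) hV0.le
    (fun G hG => by simpa [dd] using hV G hG)
    (by
      have : bexp p s (fun G => F G + (-m)) = 0 := by
        rw [bexp_add, bexp_const]; linarith
      simpa [sub_eq_add_neg] using this)
    (fun G _ => by
      rw [abs_le]
      constructor <;> linarith [hF0 G, hF1 G])
    j (1 / √V) (by positivity) ((le_max_left _ _).trans hj.le) hθ.le
  have hL2 : Real.exp ((1 / √V) ^ 2 * V + (1 / √V) ^ 2 / 2 ^ j) ≤ Real.exp 2 := by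
    rw [hθ]
    have : (1 / √V) ^ 2 / 2 ^ j ≤ 1 := by
      rw [div_le_one (by positivity)]
      exact (le_max_right _ _).trans hj.le
    exact Real.exp_le_exp.2 (by linarith)
  have h1 : bexp p s (fun G => if x * √V ≤ F G - m then 1 else 0)
      ≤ bexp p s (fun G => Real.exp (-x) * Real.exp (1 / √V * (F G - m))) := by
    refine bexp_mono hp0 hp1 fun G _ => ?_
    split_ifs with h
    · rw [← Real.exp_add]
      apply Real.one_le_exp
      have : x ≤ 1 / √V * (F G - m) := by
        rw [div_mul_eq_mul_div, one_mul, le_div_iff₀ hs]; exact h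
      linarith
    · positivity
  rw [bexp_const_mul] at h1
  refine h1.trans ?_
  rw [show (2 : ℝ) - x = -x + 2 by ring, Real.exp_add]
  exact mul_le_mul_of_nonneg_left (hL.trans hL2) (Real.exp_pos _).le

/-! ### From independent edges to a fixed number of edges -/

/-- The most likely cardinality of a `p`-random subset of an `N`-set is `M` when `p = M / N`,
hence it occurs with probability at least `1 / (N + 1)`. -/
lemma binomial_mode {N M : ℕ} (hM : M ≤ N) (hN : 0 < N) :
    1 ≤ ((N : ℝ) + 1) *
      (N.choose M * ((M : ℝ) / N) ^ M * (1 - (M : ℝ) / N) ^ (N - M)) := by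
  set p : ℝ := (M : ℝ) / N with hp
  have hN' : (0 : ℝ) < N := by exact_mod_cast hN
  have hMN : (M : ℝ) ≤ N := by exact_mod_cast hM
  have hp0 : 0 ≤ p := by positivity
  have hp1 : 0 ≤ 1 - p := by
    rw [hp, sub_nonneg, div_le_one hN']; exact hMN
  set a : ℕ → ℝ := fun j => N.choose j * p ^ j * (1 - p) ^ (N - j) with ha
  have hrec : ∀ j < N, ∃ c : ℝ, 0 ≤ c ∧ a (j + 1) * (j + 1) = c * (N - j) * p ∧
      a j * (j + 1) = c * (j + 1) * (1 - p) := by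
    intro j hj
    refine ⟨N.choose j * p ^ j * (1 - p) ^ (N - (j + 1)), by positivity, ?_, ?_⟩
    · have h1 : (N.choose (j + 1) : ℝ) * (j + 1) = N.choose j * (N - j) := by
        have := Nat.choose_succ_right_eq N j
        rw [← Nat.cast_sub hj.le]
        exact_mod_cast this
      simp only [ha]
      calc _ = ((N.choose (j + 1) : ℝ) * (j + 1)) * p ^ (j + 1) * (1 - p) ^ (N - (j + 1)) := by ring
        _ = _ := by rw [h1, pow_succ]; ring
    · have : N - j = N - (j + 1) + 1 := by omega
      simp only [ha, this, pow_succ]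
      ring
  have hNp : (N : ℝ) * p = M := by rw [hp]; field_simp
  have up : ∀ j, j + 1 ≤ M → a j ≤ a (j + 1) := by
    intro j hj
    obtain ⟨c, hc, h1, h2⟩ := hrec j (by omega)
    have hj' : (j : ℝ) + 1 ≤ M := by exact_mod_cast hj
    have : a j * (j + 1) ≤ a (j + 1) * (j + 1) := by
      rw [h1, h2, mul_assoc, mul_assoc]
      apply mul_le_mul_of_nonneg_left _ hc
      nlinarith
    exact le_of_mul_le_mul_right this (by positivity)
  have down : ∀ j, M ≤ j → j < N → a (j + 1) ≤ a j := by
    intro j hj hjN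
    obtain ⟨c, hc, h1, h2⟩ := hrec j hjN
    have hj' : (M : ℝ) ≤ j := by exact_mod_cast hj
    have : a (j + 1) * (j + 1) ≤ a j * (j + 1) := by
      rw [h1, h2, mul_assoc, mul_assoc]
      apply mul_le_mul_of_nonneg_left _ hc
      nlinarith
    exact le_of_mul_le_mul_right this (by positivity)
  have lo : ∀ d, d ≤ M → a (M - d) ≤ a M := by
    intro d
    induction d with
    | zero => intro _; simp
    | succ d ih =>
      intro hd
      have := up (M - (d + 1)) (by omega)
      rw [show M - (d + 1) + 1 = M - d by omega] at this
      exact this.trans (ih (by omega))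
  have hi : ∀ d, M + d ≤ N → a (M + d) ≤ a M := by
    intro d
    induction d with
    | zero => intro _; simp
    | succ d ih => intro hd; exact (down (M + d) (by omega) (by omega)).trans (ih (by omega))
  have all : ∀ j ∈ range (N + 1), a j ≤ a M := by
    intro j hj
    have hj' : j ≤ N := by simpa [Nat.lt_succ_iff] using hj
    rcases le_total j M with h | h
    · have := lo (M - j) (by omega)
      rwa [show M - (M - j) = j by omega] at this
    · have := hi (j - M) (by omega)
      rwa [show M + (j - M) = j by omega] at this
  have hsum : ∑ j ∈ range (N + 1), a j = 1 := by
    have := add_pow p (1 - p) N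
    rw [add_sub_cancel, one_pow] at this
    rw [this]
    exact sum_congr rfl fun j _ => by simp only [ha]; ring
  calc (1 : ℝ) = ∑ j ∈ range (N + 1), a j := hsum.symm
    _ ≤ ∑ j ∈ range (N + 1), a M := sum_le_sum all
    _ = _ := by simp [ha]

/-- Transfer from independent sampling to uniform `M`-subsets, at the price of a factor `N + 1`. -/
lemma card_slice_le {s : Finset α} {M : ℕ} (hM : M ≤ s.card) (hN : 0 < s.card)
    (P : Finset α → Prop) [DecidablePred P] :
    (((s.powersetCard M).filter P).card : ℝ) / (s.powersetCard M).card
      ≤ ((s.card : ℝ) + 1) * bexp ((M : ℝ) / s.card) s (fun G => if P G then 1 else 0) := by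
  set p : ℝ := (M : ℝ) / s.card with hp
  have hN' : (0 : ℝ) < s.card := by exact_mod_cast hN
  have hp0 : 0 ≤ p := by positivity
  have hp1 : 0 ≤ 1 - p := by
    rw [hp, sub_nonneg, div_le_one hN']; exact_mod_cast hM
  have hmode := binomial_mode hM hN
  rw [← hp] at hmode
  set w := p ^ M * (1 - p) ^ (s.card - M) with hw
  have hw0 : 0 ≤ w := by positivity
  have h1 : (((s.powersetCard M).filter P).card : ℝ) * w
      ≤ bexp p s (fun G => if P G then 1 else 0) := by
    unfold bexp
    calc (((s.powersetCard M).filter P).card : ℝ) * w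
        = ∑ G ∈ (s.powersetCard M).filter P,
            p ^ G.card * (1 - p) ^ (s.card - G.card) * (if P G then 1 else 0) := by
          rw [← nsmul_eq_mul, ← sum_const]
          refine sum_congr rfl fun G hG => ?_
          simp only [mem_filter, mem_powersetCard] at hG
          rw [if_pos hG.2, hG.1.2, mul_one]
      _ ≤ _ := by
          refine sum_le_sum_of_subset_of_nonneg (fun G hG => ?_) fun G _ _ => by positivity
          simp only [mem_filter, mem_powersetCard] at hG
          exact mem_powerset.2 hG.1.1
  rw [card_powersetCard]
  have hc : (0 : ℝ) < s.card.choose M := by exact_mod_cast Nat.choose_pos hM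
  rw [div_le_iff₀ hc]
  set b := bexp p s (fun G => if P G then 1 else 0)
  set c := (((s.powersetCard M).filter P).card : ℝ)
  have hc0 : 0 ≤ c := by positivity
  calc c = c * 1 := by ring
    _ ≤ c * (((s.card : ℝ) + 1) * (s.card.choose M * p ^ M * (1 - p) ^ (s.card - M))) :=
        mul_le_mul_of_nonneg_left hmode hc0
    _ = ((s.card : ℝ) + 1) * (c * w) * s.card.choose M := by rw [hw]; ring
    _ ≤ ((s.card : ℝ) + 1) * b * s.card.choose M := by gcongr

end Bernoulli

/-! ### The Lindeberg method -/

lemma abs_mix_sub_le {p A B C c d : ℝ} (hp0 : 0 ≤ p) (hp1 : p ≤ 1) (hA : |A| ≤ c) (hB : |B| ≤ c)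
    (hC : |C| ≤ d) : |(1 - p) * A + p * B - C| ≤ c + d := by
  rw [abs_le] at *
  have hq : 0 ≤ 1 - p := by linarith
  constructor <;>
  nlinarith [mul_le_mul_of_nonneg_left hA.1 hq, mul_le_mul_of_nonneg_left hA.2 hq,
    mul_le_mul_of_nonneg_left hB.1 hp0, mul_le_mul_of_nonneg_left hB.2 hp0]

/-- Exchange of a single summand: a Bernoulli(`p`) multiple of `b` may be replaced by its mean
`p * b` together with an increase of the smoothing variance by its variance `p * (1 - p) * b ^ 2`,
up to an error of third order. -/
lemma lindeberg_step {p b v : ℝ} (hp0 : 0 ≤ p) (hp1 : p ≤ 1) (hb : |b| ≤ 1) (hv : 1 ≤ v)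
    (z y : ℝ) :
    |(1 - p) * Phi ((z - y) / √v) + p * Phi ((z - (y + b)) / √v)
        - Phi ((z - (y + p * b)) / √(v + p * (1 - p) * b ^ 2))| ≤ 2 / (√v) ^ 3 := by
  have hs1 : 1 ≤ √v := Real.one_le_sqrt.2 hv
  have hs : 0 < √v := by linarith
  have hq : 0 ≤ 1 - p := by linarith
  set β := b / √v with hβ
  set a := (z - (y + p * b)) / √v with ha
  set τ := p * (1 - p) * β ^ 2 with hτ
  have hτ0 : 0 ≤ τ := by positivity
  have hβ1 : |β| ≤ 1 / √v := by
    rw [hβ, abs_div, abs_of_pos hs]; gcongr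
  have hβ2 : |β| ≤ 1 := hβ1.trans (by rw [div_le_one hs]; exact hs1)
  have e1 : (z - y) / √v = a + p * β := by rw [ha, hβ]; field_simp; ring
  have e2 : (z - (y + b)) / √v = a + (-(1 - p) * β) := by rw [ha, hβ]; field_simp; ring
  have e3 : (z - (y + p * b)) / √(v + p * (1 - p) * b ^ 2) = a / √(1 + τ) := by
    have : v + p * (1 - p) * b ^ 2 = v * (1 + τ) := by
      rw [hτ, hβ, div_pow, Real.sq_sqrt (by linarith)]; field_simp
    rw [this, Real.sqrt_mul (by linarith), ha, div_div]
  rw [e1, e2, e3]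
  have t1 := Phi_taylor_three a (p * β)
  have t2 := Phi_taylor_three a (-(1 - p) * β)
  have t3 := Phi_var_taylor a hτ0
  have hB : 0 ≤ |β| := abs_nonneg β
  have b1 : |p * β| ^ 3 ≤ |β| ^ 3 := by
    rw [abs_mul, abs_of_nonneg hp0]
    gcongr
    nlinarith
  have b2 : |-(1 - p) * β| ^ 3 ≤ |β| ^ 3 := by
    rw [abs_mul, abs_neg, abs_of_nonneg hq]
    gcongr
    nlinarith
  have b3 : τ ^ 2 ≤ |β| ^ 3 := by
    have h1 : τ ≤ |β| ^ 2 := by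
      rw [hτ, sq_abs]
      have : p * (1 - p) ≤ 1 := by nlinarith
      nlinarith [sq_nonneg β]
    calc τ ^ 2 ≤ (|β| ^ 2) ^ 2 := by gcongr
      _ = |β| ^ 3 * |β| := by ring
      _ ≤ |β| ^ 3 * 1 := by gcongr
      _ = _ := by ring
  have b4 : |β| ^ 3 ≤ 1 / (√v) ^ 3 := by
    calc |β| ^ 3 ≤ (1 / √v) ^ 3 := by gcongr
      _ = _ := by rw [div_pow, one_pow]
  -- first order terms cancel, second order terms match the change of variance
  have key : (1 - p) * Phi (a + p * β) + p * Phi (a + -(1 - p) * β) - Phi (a / √(1 + τ))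
      = (1 - p) * (Phi (a + p * β) - Phi a - phi a * (p * β) + a * phi a * (p * β) ^ 2 / 2)
        + p * (Phi (a + -(1 - p) * β) - Phi a - phi a * (-(1 - p) * β)
            + a * phi a * (-(1 - p) * β) ^ 2 / 2)
        - (Phi (a / √(1 + τ)) - Phi a + τ * (a * phi a) / 2) := by
    rw [hτ]; ring
  have : 2 / (√v) ^ 3 = 2 * (1 / (√v) ^ 3) := by ring
  rw [key, this, two_mul]
  exact abs_mix_sub_le hp0 hp1 (t1.trans (b1.trans b4)) (t2.trans (b2.trans b4))
    (t3.trans (b3.trans b4))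

/-- The Lindeberg method for a weighted sum of independent Bernoulli variables, tested against a
normal distribution function of variance `v`: the summands are absorbed one at a time into the
variance parameter. -/
lemma lindeberg {α : Type*} [DecidableEq α] {p v : ℝ} (hp0 : 0 ≤ p) (hp1 : p ≤ 1) (hv : 1 ≤ v)
    (b : α → ℝ) (hb : ∀ e, |b e| ≤ 1) (z : ℝ) (s : Finset α) : ∀ y : ℝ,
    |bexp p s (fun G => Phi ((z - (y + ∑ e ∈ G, b e)) / √v))
        - Phi ((z - (y + p * ∑ e ∈ s, b e)) / √(v + p * (1 - p) * ∑ e ∈ s, b e ^ 2))|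
      ≤ s.card * (2 / (√v) ^ 3) := by
  have hs : 0 < √v := Real.sqrt_pos.2 (by linarith)
  have hq : 0 ≤ 1 - p := by linarith
  induction s using Finset.induction_on with
  | empty => intro y; simp [bexp_empty]
  | insert a s ha ih =>
    intro y
    have i0 := ih y
    have i1 := ih (y + b a)
    have hV : 0 ≤ p * (1 - p) * ∑ e ∈ s, b e ^ 2 := by positivity
    set v' := v + p * (1 - p) * ∑ e ∈ s, b e ^ 2 with hv'
    have st := lindeberg_step hp0 hp1 (hb a) (v := v') (by linarith) z (y + p * ∑ e ∈ s, b e)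
    have hle : 2 / (√v') ^ 3 ≤ 2 / (√v) ^ 3 := by
      gcongr
      linarith
    have hF : bexp p s (fun G => Phi ((z - (y + ∑ e ∈ insert a G, b e)) / √v))
        = bexp p s (fun G => Phi ((z - (y + b a + ∑ e ∈ G, b e)) / √v)) := by
      refine sum_congr rfl fun G hG => ?_
      have : a ∉ G := fun h => ha (mem_powerset.1 hG h)
      simp only [sum_insert this, add_assoc]
    rw [bexp_insert p ha, hF, sum_insert ha, sum_insert ha, card_insert_of_notMem ha]
    have e1 : v + p * (1 - p) * (b a ^ 2 + ∑ e ∈ s, b e ^ 2) = v' + p * (1 - p) * b a ^ 2 := by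
      rw [hv']; ring
    have e2 : y + p * (b a + ∑ e ∈ s, b e) = y + p * ∑ e ∈ s, b e + p * b a := by ring
    have e3 : y + b a + p * ∑ e ∈ s, b e = y + p * ∑ e ∈ s, b e + b a := by ring
    rw [e1, e2]
    rw [e3] at i1
    have h := abs_mix_sub_le hp0 hp1 i0 i1 ((abs_sub_comm _ _).trans_le (st.trans hle))
    push_cast
    rw [add_mul, one_mul]
    refine le_trans (le_of_eq ?_) h
    congr 1
    ring

/-! ### Uniform averages and almost orthogonality -/

section Uniform
variable {α : Type*}

lemma Exu_add (Ω : Finset α) (f g : α → ℝ) :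
    Exu Ω (fun a => f a + g a) = Exu Ω f + Exu Ω g := by
  simp only [Exu, sum_add_distrib, add_div]

lemma Exu_const_mul (Ω : Finset α) (c : ℝ) (f : α → ℝ) :
    Exu Ω (fun a => c * f a) = c * Exu Ω f := by
  simp only [Exu, ← mul_sum, mul_div_assoc]

lemma Exu_sum {ι : Type*} (Ω : Finset α) (t : Finset ι) (f : ι → α → ℝ) :
    Exu Ω (fun a => ∑ i ∈ t, f i a) = ∑ i ∈ t, Exu Ω (f i) := by
  simp only [Exu, sum_div]
  rw [sum_comm]

lemma Exu_mono {Ω : Finset α} {f g : α → ℝ} (h : ∀ a ∈ Ω, f a ≤ g a) : Exu Ω f ≤ Exu Ω g := by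
  unfold Exu
  gcongr with a ha
  exact h a ha

lemma Exu_const {Ω : Finset α} (h : Ω.Nonempty) (c : ℝ) : Exu Ω (fun _ => c) = c := by
  have : (Ω.card : ℝ) ≠ 0 := by exact_mod_cast h.card_pos.ne'
  simp [Exu, this]

lemma abs_Exu_le {Ω : Finset α} {f : α → ℝ} {c : ℝ} (hc : 0 ≤ c) (h : ∀ a ∈ Ω, |f a| ≤ c) :
    |Exu Ω f| ≤ c := by
  rcases Ω.eq_empty_or_nonempty with rfl | hΩ
  · simpa [Exu] using hc
  · rw [abs_le, ← Exu_const hΩ c, ← neg_one_mul, ← Exu_const_mul]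
    exact ⟨Exu_mono fun a ha => by linarith [(abs_le.1 (h a ha)).1],
      Exu_mono fun a ha => (abs_le.1 (h a ha)).2⟩

lemma Exu_mul_sq_le (Ω : Finset α) (f g : α → ℝ) :
    (Exu Ω (fun a => f a * g a)) ^ 2 ≤ Exu Ω (fun a => f a ^ 2) * Exu Ω (fun a => g a ^ 2) := by
  unfold Exu
  rw [div_pow, div_mul_div_comm, ← sq]
  gcongr
  exact sum_mul_sq_le_sq_mul_sq _ _ _

/-- An almost-orthogonality (Bessel-type) inequality: the Gram operator of the family `b` is
bounded by its largest absolute row sum `Λ`. -/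
lemma gram_bound {ι : Type*} (Ω : Finset α) (E : Finset ι) (b : ι → α → ℝ) (g : α → ℝ)
    {Λ : ℝ} (hΛ0 : 0 ≤ Λ)
    (hΛ : ∀ e ∈ E, ∑ e' ∈ E, |Exu Ω (fun a => b e a * b e' a)| ≤ Λ) :
    ∑ e ∈ E, (Exu Ω (fun a => b e a * g a)) ^ 2 ≤ Λ * Exu Ω (fun a => g a ^ 2) := by
  set c : ι → ℝ := fun e => Exu Ω (fun a => b e a * g a) with hc
  set R : ι → ι → ℝ := fun e e' => Exu Ω (fun a => b e a * b e' a) with hR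
  set Q := ∑ e ∈ E, c e ^ 2 with hQ
  have hQ0 : 0 ≤ Q := sum_nonneg fun _ _ => sq_nonneg _
  have hg0 : 0 ≤ Exu Ω (fun a => g a ^ 2) := by unfold Exu; positivity
  have hRs : ∀ e e', R e e' = R e' e := fun e e' => by simp only [hR, mul_comm]
  have h1 : Q = Exu Ω (fun a => (∑ e ∈ E, c e * b e a) * g a) := by
    simp only [sum_mul]
    rw [Exu_sum]
    refine sum_congr rfl fun e _ => ?_
    simp only [mul_assoc]
    rw [Exu_const_mul, sq]
  have h2 : Exu Ω (fun a => (∑ e ∈ E, c e * b e a) ^ 2) = ∑ e ∈ E, ∑ e' ∈ E, c e * c e' * R e e' := by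
    simp only [sq, sum_mul_sum]
    rw [Exu_sum]
    refine sum_congr rfl fun e _ => ?_
    rw [Exu_sum]
    refine sum_congr rfl fun e' _ => ?_
    rw [← Exu_const_mul]
    congr 1
    funext a
    ring
  have h3 : ∑ e ∈ E, ∑ e' ∈ E, c e * c e' * R e e' ≤ Λ * Q := by
    have hrow : ∑ e ∈ E, ∑ e' ∈ E, c e ^ 2 * |R e e'| ≤ Λ * Q := by
      rw [hQ, mul_sum]
      refine sum_le_sum fun e he => ?_
      rw [← mul_sum, mul_comm Λ]
      exact mul_le_mul_of_nonneg_left (hΛ e he) (sq_nonneg _)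
    have hcol : ∑ e ∈ E, ∑ e' ∈ E, c e' ^ 2 * |R e e'| ≤ Λ * Q := by
      rw [sum_comm]
      simpa only [hRs] using hrow
    have : ∑ e ∈ E, ∑ e' ∈ E, c e * c e' * R e e'
        ≤ ∑ e ∈ E, ∑ e' ∈ E, (1 / 2 * (c e ^ 2 * |R e e'|) + 1 / 2 * (c e' ^ 2 * |R e e'|)) := by
      refine sum_le_sum fun e _ => sum_le_sum fun e' _ => ?_
      have h4 : c e * c e' * R e e' ≤ |c e| * |c e'| * |R e e'| := by
        rw [← abs_mul, ← abs_mul]; exact le_abs_self _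
      have h5 : |c e| * |c e'| ≤ 1 / 2 * (c e ^ 2 + c e' ^ 2) := by
        rw [← sq_abs (c e), ← sq_abs (c e')]
        nlinarith [sq_nonneg (|c e| - |c e'|)]
      nlinarith [mul_le_mul_of_nonneg_right h5 (abs_nonneg (R e e'))]
    refine this.trans ?_
    simp only [sum_add_distrib]
    have hr : ∀ f : ι → ι → ℝ,
        ∑ e ∈ E, ∑ e' ∈ E, 1 / 2 * f e e' = 1 / 2 * ∑ e ∈ E, ∑ e' ∈ E, f e e' := fun f => by
      simp only [mul_sum]
    rw [hr, hr]
    linarith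
  have h4 := Exu_mul_sq_le Ω (fun a => ∑ e ∈ E, c e * b e a) g
  rw [← h1, h2] at h4
  have h5 : Q ^ 2 ≤ Λ * Q * Exu Ω (fun a => g a ^ 2) :=
    h4.trans (mul_le_mul_of_nonneg_right h3 hg0)
  rcases hQ0.eq_or_lt with h | h
  · rw [← h]
    positivity
  · nlinarith

end Uniform

/-! ### Edge indicators and the smoothed distribution function of the edge count -/

section Edges
open scoped Classical
variable {n : ℕ}

/-- Indicator that both endpoints of `e` lie in `S`. -/
def inc (S : Finset (Fin n)) (e : Sym2 (Fin n)) : ℝ := if e.toFinset ⊆ S then 1 else 0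

/-- The indicator `inc S e`, centred by the edge density `κ = K / N` of a `k`-set. -/
def cinc (k : ℕ) (S : Finset (Fin n)) (e : Sym2 (Fin n)) : ℝ := inc S e - Kr k / Nr n

lemma cast_choose_two (m : ℕ) : ((m.choose 2 : ℕ) : ℝ) = (m : ℝ) * ((m : ℝ) - 1) / 2 :=
  Nat.cast_choose_two ℝ m

lemma mem_completeEdges {e : Sym2 (Fin n)} : e ∈ completeEdges n ↔ ¬ e.IsDiag := by
  simp [completeEdges]

lemma filter_subset_eq (S : Finset (Fin n)) :
    (completeEdges n).filter (fun e => e.toFinset ⊆ S) = S.offDiag.image Sym2.mk.uncurry := by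
  ext e
  induction e using Sym2.ind with
  | _ a b =>
    simp only [mem_filter, mem_completeEdges, Sym2.mk_isDiag_iff, mem_image, mem_offDiag,
      Prod.exists, Function.uncurry_apply_pair, Sym2.eq_iff, subset_iff, Sym2.mem_toFinset,
      Sym2.mem_iff]
    constructor
    · rintro ⟨hab, h⟩
      exact ⟨a, b, ⟨h (Or.inl rfl), h (Or.inr rfl), hab⟩, Or.inl ⟨rfl, rfl⟩⟩
    · rintro ⟨c, d, ⟨hc, hd, hcd⟩, ⟨rfl, rfl⟩ | ⟨rfl, rfl⟩⟩
      · exact ⟨hcd, by rintro x (rfl | rfl) <;> assumption⟩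
      · exact ⟨fun h => hcd h.symm, by rintro x (rfl | rfl) <;> assumption⟩

lemma sum_inc (S : Finset (Fin n)) : ∑ e ∈ completeEdges n, inc S e = Kr S.card := by
  simp only [inc, sum_boole]
  rw [filter_subset_eq, Sym2.card_image_offDiag, cast_choose_two, Kr]

lemma card_completeEdges : ((completeEdges n).card : ℝ) = Nr n := by
  have h := sum_inc (univ : Finset (Fin n))
  simpa [inc, Kr, Nr] using h

lemma edgesIn_eq (G : Finset (Sym2 (Fin n))) (S : Finset (Fin n)) :
    (edgesIn G S : ℝ) = ∑ e ∈ G, inc S e := by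
  have : ∀ e : Sym2 (Fin n), (∀ v ∈ e, v ∈ S) ↔ e.toFinset ⊆ S := fun e => by
    simp [subset_iff]
  simp [edgesIn, inc, this, sum_boole]

/-- The number of `k`-sets containing a given set `T` depends only on the size of `T`. -/
lemma card_superset_eq (k : ℕ) {T T' : Finset (Fin n)} (h : T.card = T'.card) :
    ((kSets n k).filter (T ⊆ ·)).card = ((kSets n k).filter (T' ⊆ ·)).card := by
  have key : ∀ T : Finset (Fin n), T.card ≤ k →
      ((kSets n k).filter (T ⊆ ·)).card = (n - T.card).choose (k - T.card) := by
    intro T hT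
    have : (n - T.card) = (univ \ T).card := by
      rw [card_sdiff_of_subset (subset_univ T)]; simp
    rw [this, ← card_powersetCard]
    refine card_bij' (fun S _ => S \ T) (fun S _ => S ∪ T) ?_ ?_ ?_ ?_
    · intro S hS
      simp only [kSets, mem_filter, mem_powersetCard] at hS
      rw [mem_powersetCard, card_sdiff_of_subset hS.2, hS.1.2]
      exact ⟨sdiff_subset_sdiff (subset_univ _) (le_refl _), rfl⟩
    · intro S hS
      rw [mem_powersetCard] at hS
      have hd : Disjoint S T := disjoint_of_subset_left hS.1 sdiff_disjoint
      simp only [kSets, mem_filter, mem_powersetCard]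
      refine ⟨⟨subset_univ _, ?_⟩, subset_union_right⟩
      rw [card_union_of_disjoint hd, hS.2]
      omega
    · intro S hS
      simp only [kSets, mem_filter, mem_powersetCard] at hS
      exact sdiff_union_of_subset hS.2
    · intro S hS
      rw [mem_powersetCard] at hS
      have hd : Disjoint S T := disjoint_of_subset_left hS.1 sdiff_disjoint
      exact union_sdiff_cancel_right hd
  by_cases hk : T.card ≤ k
  · rw [key T hk, key T' (h ▸ hk), h]
  · have emp : ∀ T : Finset (Fin n), ¬ T.card ≤ k → ((kSets n k).filter (T ⊆ ·)) = ∅ := by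
      intro T hT
      rw [filter_eq_empty_iff]
      intro S hS hTS
      simp only [kSets, mem_powersetCard] at hS
      exact hT ((card_le_card hTS).trans hS.2.le)
    rw [emp T hk, emp T' (h ▸ hk)]

lemma Exu_superset_eq (k : ℕ) {T T' : Finset (Fin n)} (h : T.card = T'.card) :
    Exu (kSets n k) (fun S => if T ⊆ S then (1 : ℝ) else 0)
      = Exu (kSets n k) (fun S => if T' ⊆ S then (1 : ℝ) else 0) := by
  simp only [Exu, sum_boole, card_superset_eq k h]

lemma Exu_cinc_mul (k : ℕ) (e e' : Sym2 (Fin n)) :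
    Exu (kSets n k) (fun S => cinc k S e * cinc k S e')
      = Exu (kSets n k) (fun S => if e.toFinset ∪ e'.toFinset ⊆ S then (1 : ℝ) else 0)
        + (-(Kr k / Nr n) * Exu (kSets n k) (fun S => if e.toFinset ⊆ S then (1 : ℝ) else 0)
        + (-(Kr k / Nr n) * Exu (kSets n k) (fun S => if e'.toFinset ⊆ S then (1 : ℝ) else 0)
        + Exu (kSets n k) (fun _ => (Kr k / Nr n) ^ 2))) := by
  rw [← Exu_const_mul, ← Exu_const_mul, ← Exu_add, ← Exu_add, ← Exu_add]
  congr 1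
  funext S
  simp only [cinc, inc, union_subset_iff]
  by_cases h1 : e.toFinset ⊆ S <;> by_cases h2 : e'.toFinset ⊆ S <;> simp [h1, h2] <;> ring

lemma Nr_nonneg (n : ℕ) : 0 ≤ Nr n := by rw [← card_completeEdges]; positivity

lemma Kr_nonneg (k : ℕ) : 0 ≤ Kr k := by rw [Kr, ← cast_choose_two]; positivity

lemma kappa_le_one {k : ℕ} (hk : k ≤ n) : Kr k / Nr n ≤ 1 := by
  refine div_le_one_of_le₀ ?_ (Nr_nonneg n)
  rw [Kr, Nr, ← cast_choose_two, ← cast_choose_two]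
  exact_mod_cast Nat.choose_le_choose 2 hk

lemma abs_cinc_le {k : ℕ} (hk : k ≤ n) (S : Finset (Fin n)) (e : Sym2 (Fin n)) :
    |cinc k S e| ≤ 1 := by
  have h0 : 0 ≤ Kr k / Nr n := div_nonneg (Kr_nonneg k) (Nr_nonneg n)
  have h1 := kappa_le_one hk
  unfold cinc inc
  rw [abs_le]
  split_ifs <;> constructor <;> linarith

lemma sum_cinc {k : ℕ} (hn : 2 ≤ n) {S : Finset (Fin n)} (hS : S ∈ kSets n k) :
    ∑ e ∈ completeEdges n, cinc k S e = 0 := by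
  have hn' : (2 : ℝ) ≤ n := by exact_mod_cast hn
  have hN : Nr n ≠ 0 := by
    unfold Nr
    have : (0 : ℝ) < n * (n - 1) / 2 := by
      have : (0 : ℝ) < n - 1 := by linarith
      positivity
    exact this.ne'
  simp only [kSets, mem_powersetCard] at hS
  simp only [cinc, sum_sub_distrib, sum_inc, hS.2, sum_const, nsmul_eq_mul, card_completeEdges]
  field_simp
  ring

lemma card_meeting_le (e : Sym2 (Fin n)) :
    ((completeEdges n).filter (fun e' => ¬ Disjoint e.toFinset e'.toFinset)).card ≤ 2 * n := by
  induction e using Sym2.ind with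
  | _ a b =>
    have hsub : (completeEdges n).filter (fun e' => ¬ Disjoint (s(a, b)).toFinset e'.toFinset)
        ⊆ (univ : Finset (Fin n)).image (fun x => s(a, x)) ∪ univ.image (fun x => s(b, x)) := by
      intro e' he'
      rw [mem_filter, not_disjoint_iff] at he'
      obtain ⟨_, v, hv, hv'⟩ := he'
      rw [Sym2.mem_toFinset] at hv hv'
      obtain ⟨w, rfl⟩ := hv'
      rcases Sym2.mem_iff.1 hv with rfl | rfl
      · exact mem_union_left _ (mem_image_of_mem _ (mem_univ _))
      · exact mem_union_right _ (mem_image_of_mem _ (mem_univ _))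
    refine (card_le_card hsub).trans ((card_union_le _ _).trans ?_)
    have h := fun c : Fin n => (card_image_le (s := univ) (f := fun x : Fin n => s(c, x)))
    have ha := h a
    have hb := h b
    simp only [card_univ, Fintype.card_fin] at ha hb
    omega

/-- Row sums of the covariance matrix of the centred edge indicators. The edges disjoint from `e`
all have the same covariance with `e`, and the signed row sum vanishes, so their total absolute
contribution equals that of the `O(n)` edges that meet `e`. -/
lemma row_sum_le {k : ℕ} (hn : 2 ≤ n) (hk : k ≤ n) (e : Sym2 (Fin n)) :
    ∑ e' ∈ completeEdges n, |Exu (kSets n k) (fun S => cinc k S e * cinc k S e')| ≤ 4 * n := by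
  set R : Sym2 (Fin n) → ℝ := fun e' => Exu (kSets n k) (fun S => cinc k S e * cinc k S e') with hR
  have hR1 : ∀ e', |R e'| ≤ 1 := fun e' => by
    refine abs_Exu_le zero_le_one fun S _ => ?_
    rw [abs_mul]
    exact mul_le_one₀ (abs_cinc_le hk S e) (abs_nonneg _) (abs_cinc_le hk S e')
  have htot : ∑ e' ∈ completeEdges n, R e' = 0 := by
    rw [← Exu_sum]
    unfold Exu
    rw [sum_eq_zero, zero_div]
    intro S hS
    rw [← mul_sum, sum_cinc hn hS, mul_zero]
  set I := (completeEdges n).filter (fun e' => ¬ Disjoint e.toFinset e'.toFinset) with hI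
  set J := (completeEdges n).filter (fun e' => Disjoint e.toFinset e'.toFinset) with hJ
  have hsplit : ∀ f : Sym2 (Fin n) → ℝ,
      ∑ e' ∈ completeEdges n, f e' = ∑ e' ∈ J, f e' + ∑ e' ∈ I, f e' := fun f =>
    (sum_filter_add_sum_filter_not _ _ _).symm
  have hIsum : ∑ e' ∈ I, |R e'| ≤ 2 * n := by
    calc ∑ e' ∈ I, |R e'| ≤ ∑ e' ∈ I, (1 : ℝ) := sum_le_sum fun e' _ => hR1 e'
      _ = I.card := by simp
      _ ≤ 2 * n := by exact_mod_cast card_meeting_le e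
  have hcard : ∀ e' ∈ completeEdges n, e'.toFinset.card = 2 := fun e' he' =>
    Sym2.card_toFinset_of_not_isDiag e' (mem_completeEdges.1 he')
  have hJc : ∀ e₁ ∈ J, ∀ e₂ ∈ J, R e₁ = R e₂ := by
    intro e₁ h₁ e₂ h₂
    rw [hJ, mem_filter] at h₁ h₂
    simp only [hR, Exu_cinc_mul]
    rw [Exu_superset_eq k (T := e₁.toFinset) (T' := e₂.toFinset)
        (by rw [hcard _ h₁.1, hcard _ h₂.1]),
      Exu_superset_eq k (T := e.toFinset ∪ e₁.toFinset) (T' := e.toFinset ∪ e₂.toFinset)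
        (by rw [card_union_of_disjoint h₁.2, card_union_of_disjoint h₂.2, hcard _ h₁.1,
          hcard _ h₂.1])]
  have hJsum : ∑ e' ∈ J, |R e'| = |∑ e' ∈ J, R e'| := by
    rcases J.eq_empty_or_nonempty with h | ⟨e₁, h₁⟩
    · rw [h]; simp
    · rw [sum_congr rfl (fun e' he' => by rw [hJc e' he' e₁ h₁]),
        sum_congr (g := fun _ => R e₁) rfl (fun e' he' => hJc e' he' e₁ h₁)]
      simp [abs_mul]
  have hJ2 : |∑ e' ∈ J, R e'| ≤ ∑ e' ∈ I, |R e'| := by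
    have h1 : ∑ e' ∈ J, R e' = -∑ e' ∈ I, R e' := by
      have := hsplit R
      rw [htot] at this
      linarith
    rw [h1, abs_neg]
    exact abs_sum_le_sum_abs _ _
  rw [hsplit, hJsum]
  linarith

/-- The smoothed distribution function of the centred edge count of a random `k`-set: the
indicator of `(-∞, z]` is replaced by its convolution with a centred normal law of variance `v`. -/
def smoothCdf (k : ℕ) (v z : ℝ) (G : Finset (Sym2 (Fin n))) : ℝ :=
  Exu (kSets n k) (fun S => Phi ((z - ∑ e ∈ G, cinc k S e) / √v))

lemma smoothCdf_nonneg (k : ℕ) (v z : ℝ) (G : Finset (Sym2 (Fin n))) :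
    0 ≤ smoothCdf k v z G :=
  div_nonneg (sum_nonneg fun _ _ => Phi_nonneg _) (Nat.cast_nonneg _)

lemma smoothCdf_le_one (k : ℕ) (v z : ℝ) (G : Finset (Sym2 (Fin n))) :
    smoothCdf k v z G ≤ 1 :=
  (le_abs_self _).trans (abs_Exu_le zero_le_one fun _ _ => by
    rw [abs_of_nonneg (Phi_nonneg _)]; exact Phi_le_one _)

/-- The discrete gradient of `smoothCdf` is small: up to second order terms its coordinates are the
correlations of a bounded function of `S` with the almost orthogonal family `cinc`. -/
lemma gradient_bound {k : ℕ} (hn : 2 ≤ n) (hk : k ≤ n) {v : ℝ} (hv : n ≤ v) (z : ℝ)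
    (G : Finset (Sym2 (Fin n))) :
    ∑ e ∈ completeEdges n, dd e (smoothCdf k v z) G ^ 2 ≤ 9 * n / v := by
  have hn' : (2 : ℝ) ≤ n := by exact_mod_cast hn
  have hv0 : 0 < v := by linarith
  have hs : 0 < √v := Real.sqrt_pos.2 hv0
  have hsv : √v ^ 2 = v := Real.sq_sqrt hv0.le
  set W : Finset (Fin n) → ℝ := fun S => (z - ∑ e ∈ G, cinc k S e) / √v with hW
  set g : Finset (Fin n) → ℝ := fun S => -(phi (W S) / √v) with hg
  have hpt : ∀ e, |dd e (smoothCdf k v z) G - Exu (kSets n k) (fun S => cinc k S e * g S)|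
      ≤ 1 / v := by
    intro e
    have h1 : dd e (smoothCdf k v z) G - Exu (kSets n k) (fun S => cinc k S e * g S)
        = Exu (kSets n k) (fun S =>
          Phi ((z - ∑ e' ∈ insert e G, cinc k S e') / √v)
          + ((-1) * Phi ((z - ∑ e' ∈ G.erase e, cinc k S e') / √v)
          + (-1) * (cinc k S e * g S))) := by
      rw [Exu_add, Exu_add, Exu_const_mul, Exu_const_mul]
      simp only [dd, smoothCdf]
      ring
    rw [h1]
    refine abs_Exu_le (by positivity) fun S _ => ?_
    have hx : |cinc k S e / √v| ^ 2 ≤ 1 / v := by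
      rw [abs_div, div_pow, abs_of_pos hs, hsv]
      gcongr
      exact pow_le_one₀ (abs_nonneg _) (abs_cinc_le hk S e)
    by_cases he : e ∈ G
    · have h2 : (z - ∑ e' ∈ G.erase e, cinc k S e') / √v = W S + cinc k S e / √v := by
        simp only [hW]
        rw [← add_sum_erase G _ he]
        ring
      rw [insert_eq_of_mem he, h2]
      refine le_trans (le_of_eq ?_) ((Phi_taylor_two (W S) (cinc k S e / √v)).trans hx)
      rw [← abs_neg]
      congr 1
      simp only [hg, hW]
      ring
    · have h2 : (z - ∑ e' ∈ insert e G, cinc k S e') / √v = W S + -(cinc k S e / √v) := by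
        simp only [hW]
        rw [sum_insert he]
        ring
      rw [erase_eq_of_notMem he, h2]
      refine le_trans (le_of_eq ?_)
        ((Phi_taylor_two (W S) (-(cinc k S e / √v))).trans (by rwa [abs_neg]))
      congr 1
      simp only [hg, hW]
      ring
  have hgram := gram_bound (kSets n k) (completeEdges n) (fun e S => cinc k S e) g
    (Λ := 4 * n) (by positivity) (fun e _ => row_sum_le hn hk e)
  have hg2 : Exu (kSets n k) (fun S => g S ^ 2) ≤ 1 / v := by
    refine (le_abs_self _).trans (abs_Exu_le (by positivity) fun S _ => ?_)
    rw [abs_of_nonneg (sq_nonneg _), hg]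
    simp only
    rw [neg_sq, div_pow, hsv]
    gcongr
    exact pow_le_one₀ (phi_nonneg _) (phi_le_one _)
  have hsq : ∀ e ∈ completeEdges n, dd e (smoothCdf k v z) G ^ 2
      ≤ 2 * (Exu (kSets n k) (fun S => cinc k S e * g S)) ^ 2 + 2 * (1 / v) ^ 2 := by
    intro e _
    have h := hpt e
    set d := dd e (smoothCdf k v z) G
    set c := Exu (kSets n k) (fun S => cinc k S e * g S)
    have h2 : (d - c) ^ 2 ≤ (1 / v) ^ 2 := by
      rw [← sq_abs (d - c)]
      exact pow_le_pow_left₀ (abs_nonneg _) h 2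
    nlinarith [sq_nonneg (d - 2 * c)]
  refine (sum_le_sum hsq).trans ?_
  rw [sum_add_distrib, ← mul_sum, sum_const, nsmul_eq_mul, card_completeEdges]
  have h3 : ∑ e ∈ completeEdges n, (Exu (kSets n k) (fun S => cinc k S e * g S)) ^ 2
      ≤ 4 * n * (1 / v) :=
    hgram.trans (mul_le_mul_of_nonneg_left hg2 (by positivity))
  have h4 : Nr n * (2 * (1 / v) ^ 2) ≤ n * (1 / v) := by
    have h5 : Nr n * 2 ≤ n * v := by
      unfold Nr
      nlinarith
    have h6 : v * (1 / v) = 1 := by field_simp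
    have h7 := mul_le_mul_of_nonneg_right h5 (sq_nonneg (1 / v))
    calc Nr n * (2 * (1 / v) ^ 2) = Nr n * 2 * (1 / v) ^ 2 := by ring
      _ ≤ n * v * (1 / v) ^ 2 := h7
      _ = n * (v * (1 / v)) * (1 / v) := by ring
      _ = _ := by rw [h6, mul_one]
  calc _ ≤ 2 * (4 * n * (1 / v)) + n * (1 / v) := by linarith
    _ = _ := by ring

/-- Averaging over the random graph first: for each fixed `S` the centred edge count is a sum of
independent variables, to which the Lindeberg method applies. -/
lemma mean_smoothCdf {k : ℕ} (hn : 2 ≤ n) (hk : k ≤ n) {p v : ℝ} (hp0 : 0 ≤ p) (hp1 : p ≤ 1)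
    (hv : 1 ≤ v) (z : ℝ) :
    |bexp p (completeEdges n) (smoothCdf k v z)
        - Phi (z / √(v + p * (1 - p) * (Kr k * (1 - Kr k / Nr n))))|
      ≤ Nr n * (2 / (√v) ^ 3) := by
  have hne : (kSets n k).Nonempty := by
    rw [kSets, powersetCard_nonempty]; simpa using hk
  have hswap : bexp p (completeEdges n) (smoothCdf k v z)
      = Exu (kSets n k) (fun S => bexp p (completeEdges n)
          (fun G => Phi ((z - (0 + ∑ e ∈ G, cinc k S e)) / √v))) := by
    simp only [bexp, smoothCdf, Exu_sum, Exu_const_mul, zero_add]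
  rw [hswap]
  set P := Phi (z / √(v + p * (1 - p) * (Kr k * (1 - Kr k / Nr n)))) with hP
  have h1 : ∀ f : Finset (Fin n) → ℝ, Exu (kSets n k) f - P = Exu (kSets n k) (fun S => f S + -P) := by
    intro f
    rw [Exu_add, Exu_const hne]
    ring
  rw [h1]
  refine abs_Exu_le (mul_nonneg (Nr_nonneg n) (by positivity)) fun S hS => ?_
  have h2 := lindeberg hp0 hp1 hv (cinc k S) (abs_cinc_le hk S) z (completeEdges n) 0
  have hN : Nr n ≠ 0 := by
    have hn' : (2 : ℝ) ≤ n := by exact_mod_cast hn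
    have h3 : (0 : ℝ) < n - 1 := by linarith
    have h4 : (0 : ℝ) < n * (n - 1) / 2 := by positivity
    exact h4.ne'
  have hsq : ∑ e ∈ completeEdges n, cinc k S e ^ 2 = Kr k * (1 - Kr k / Nr n) := by
    have h3 : ∀ e, cinc k S e ^ 2
        = (1 - 2 * (Kr k / Nr n)) * inc S e + (Kr k / Nr n) ^ 2 := by
      intro e
      unfold cinc inc
      split_ifs <;> ring
    have hS' : S.card = k := by simpa [kSets, mem_powersetCard] using hS
    simp only [h3, sum_add_distrib, ← mul_sum, sum_inc, hS', sum_const, nsmul_eq_mul,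
      card_completeEdges]
    field_simp
    ring
  rw [sum_cinc hn hS, hsq, card_completeEdges] at h2
  simp only [mul_zero, add_zero, sub_zero] at h2
  exact h2

end Edges

/-! ### Concentration in the random graph and removal of the smoothing -/

section Assembly
open scoped Classical
variable {n : ℕ}

/-- Concentration for independent edges, applied to `smoothCdf` and to `1 - smoothCdf`; the
gradient bound supplies the scale `√(9n/v)`. -/
lemma smoothCdf_two_sided {k : ℕ} (hn : 2 ≤ n) (hk : k ≤ n) {p v : ℝ} (hp0 : 0 ≤ p) (hp1 : p ≤ 1)
    (hv : n ≤ v) (z x : ℝ) :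
    bexp p (completeEdges n) (fun G => if x * √(9 * n / v) ≤
      |smoothCdf k v z G - bexp p (completeEdges n) (smoothCdf k v z)| then 1 else 0)
      ≤ 2 * Real.exp (2 - x) := by
  have hn' : (2 : ℝ) ≤ n := by exact_mod_cast hn
  have hv0 : 0 < v := by linarith
  have hV0 : 0 < 9 * n / v := by positivity
  set F := smoothCdf (n := n) k v z with hF
  have h1 := concentration hp0 hp1 (completeEdges n) F hV0
    (fun G _ => gradient_bound hn hk hv z G) (smoothCdf_nonneg k v z) (smoothCdf_le_one k v z) x
  have h2 := concentration hp0 hp1 (completeEdges n) (fun G => 1 + (-1) * F G) hV0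
    (fun G _ => by
      refine le_trans (le_of_eq (sum_congr rfl fun e _ => ?_)) (gradient_bound hn hk hv z G)
      simp only [dd]
      ring)
    (fun G => by linarith [smoothCdf_le_one k v z G])
    (fun G => by linarith [smoothCdf_nonneg k v z G]) x
  rw [bexp_add, bexp_const, bexp_const_mul] at h2
  refine le_trans (bexp_mono hp0 hp1 (H := fun G =>
    (if x * √(9 * n / v) ≤ F G - bexp p (completeEdges n) F then 1 else 0)
    + (if x * √(9 * n / v) ≤ 1 + (-1) * F G - (1 + (-1) * bexp p (completeEdges n) F)
      then 1 else 0)) fun G _ => ?_) ?_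
  · set m := bexp p (completeEdges n) F
    set t := x * √(9 * n / v)
    by_cases ha : t ≤ F G - m
    · by_cases hb : t ≤ |F G - m| <;> simp only [ha, hb, if_true, if_false] <;>
        split_ifs <;> norm_num
    · by_cases hb : t ≤ |F G - m|
      · have hc : t ≤ 1 + (-1) * F G - (1 + (-1) * m) := by
          rcases le_abs.1 hb with h | h
          · exact absurd h ha
          · linarith
        simp only [ha, hb, hc, if_true, if_false]
        norm_num
      · simp only [ha, hb, if_false]
        split_ifs <;> norm_num
  · rw [bexp_add]
    linarith

lemma graphsM_eq (n M : ℕ) : graphsM n M = (completeEdges n).powersetCard M := by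
  ext G
  simp [graphsM, mem_powersetCard]

/-- In `G_{n,M}`, with high probability the smoothed distribution function is simultaneously close
to its mean at all points of a finite set `Z`. -/
lemma slice_union {k M : ℕ} (hn : 2 ≤ n) (hk : k ≤ n) (hM : (M : ℝ) ≤ Nr n) {v : ℝ} (hv : n ≤ v)
    (Z : Finset ℝ) (x : ℝ) :
    Pru (graphsM n M) (fun G => ∃ z ∈ Z, x * √(9 * n / v) ≤
      |smoothCdf k v z G - bexp (M / Nr n) (completeEdges n) (smoothCdf k v z)|)
      ≤ (Nr n + 1) * (Z.card * (2 * Real.exp (2 - x))) := by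
  have hn' : (2 : ℝ) ≤ n := by exact_mod_cast hn
  have hN : 0 < Nr n := by
    have h3 : (0 : ℝ) < n - 1 := by linarith
    unfold Nr
    positivity
  have hM' : M ≤ (completeEdges n).card := by
    rw [← card_completeEdges] at hM
    exact_mod_cast hM
  have hN' : 0 < (completeEdges n).card := by
    rw [← card_completeEdges] at hN
    exact_mod_cast hN
  have hp0 : 0 ≤ M / Nr n := by positivity
  have hp1 : M / Nr n ≤ 1 := div_le_one_of_le₀ hM hN.le
  have h := card_slice_le hM' hN' (fun G => ∃ z ∈ Z, x * √(9 * n / v) ≤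
      |smoothCdf k v z G - bexp (M / Nr n) (completeEdges n) (smoothCdf k v z)|)
  rw [card_completeEdges] at h
  unfold Pru
  rw [graphsM_eq]
  refine le_trans (le_of_eq ?_) (h.trans ?_)
  · congr
  refine mul_le_mul_of_nonneg_left ?_ (by linarith)
  refine le_trans (bexp_mono hp0 hp1 (H := fun G => ∑ z ∈ Z, if x * √(9 * n / v) ≤
      |smoothCdf k v z G - bexp (M / Nr n) (completeEdges n) (smoothCdf k v z)| then 1 else 0)
      fun G _ => ?_) ?_
  · split_ifs with hG
    · obtain ⟨z, hz, hG⟩ := hG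
      refine le_trans (le_of_eq ?_)
        (single_le_sum (fun z _ => ?_) hz)
      · rw [if_pos hG]
      · split_ifs <;> norm_num
    · exact sum_nonneg fun z _ => by split_ifs <;> norm_num
  · rw [bexp_sum]
    refine (sum_le_sum fun z _ => smoothCdf_two_sided hn hk hp0 hp1 hv z x).trans ?_
    rw [sum_const, nsmul_eq_mul]

/-- The exact variance `p(1-p)K(1-K/N)` of the centred edge count of a fixed `k`-set agrees with
`λn²` up to `O(n)`. -/
lemma variance_approx {k M : ℕ} (hn : 2 ≤ n) (hk : k ≤ n) (hM : (M : ℝ) ≤ Nr n) :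
    |(M / Nr n) * (1 - M / Nr n) * (Kr k * (1 - Kr k / Nr n)) - lamP n M k * (n : ℝ) ^ 2| ≤ (n : ℝ) := by
  have hn' : (2 : ℝ) ≤ n := by exact_mod_cast hn
  have hk' : (k : ℝ) ≤ n := by exact_mod_cast hk
  have hk0 : (0 : ℝ) ≤ k := by positivity
  have h3 : (0 : ℝ) < n - 1 := by linarith
  have hN : 0 < Nr n := by unfold Nr; positivity
  have hp0 : 0 ≤ M / Nr n := by positivity
  have hp1 : M / Nr n ≤ 1 := div_le_one_of_le₀ hM hN.le
  set p := M / Nr n with hp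
  set t := (k : ℝ) ^ 2 / n ^ 2 - Kr k / Nr n with ht
  have hlam : lamP n M k * n ^ 2 = p * (1 - p) * (k ^ 2 / 2 * (1 - k ^ 2 / n ^ 2)) := by
    rw [hp, lamP]
    field_simp
  have ht' : t = k * (n - k) / (n ^ 2 * (n - 1)) := by
    rw [ht, Kr, Nr]
    field_simp
    ring
  have hkap0 : 0 ≤ Kr k / Nr n := div_nonneg (Kr_nonneg k) (Nr_nonneg n)
  have hkap1 : Kr k / Nr n ≤ 1 := kappa_le_one hk
  have hdiff : Kr k * (1 - Kr k / Nr n) - k ^ 2 / 2 * (1 - k ^ 2 / n ^ 2)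
      = k ^ 2 / 2 * t - k / 2 * (1 - Kr k / Nr n) := by
    rw [ht]
    have : Kr k = k ^ 2 / 2 - k / 2 := by rw [Kr]; ring
    linear_combination (1 - Kr k / Nr n) * this
  have hA0 : 0 ≤ k ^ 2 / 2 * t := by
    rw [ht']
    have : (0 : ℝ) ≤ n - k := by linarith
    positivity
  have hA1 : (k : ℝ) ^ 2 / 2 * t ≤ n := by
    have h4 : t ≤ 1 / n := by
      rw [ht', div_le_div_iff₀ (by positivity) (by linarith)]
      have : (k : ℝ) * (n - k) ≤ n * (n - 1) := by nlinarith [sq_nonneg ((n : ℝ) - 2 * k)]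
      nlinarith
    calc (k : ℝ) ^ 2 / 2 * t ≤ k ^ 2 / 2 * (1 / n) := by gcongr
      _ ≤ (n : ℝ) ^ 2 / 2 * (1 / n) := by gcongr
      _ = (n : ℝ) / 2 := by field_simp
      _ ≤ n := by linarith
  have hB0 : 0 ≤ k / 2 * (1 - Kr k / Nr n) := mul_nonneg (by positivity) (by linarith)
  have hB1 : k / 2 * (1 - Kr k / Nr n) ≤ n := by nlinarith
  have hq : |p * (1 - p)| ≤ 1 := by
    rw [abs_le]; constructor <;> nlinarith
  rw [hlam, ← mul_sub, hdiff, abs_mul]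
  have h5 : |(k : ℝ) ^ 2 / 2 * t - k / 2 * (1 - Kr k / Nr n)| ≤ (n : ℝ) := by
    rw [abs_le]; constructor <;> linarith
  calc _ ≤ 1 * (n : ℝ) := mul_le_mul hq h5 (abs_nonneg _) zero_le_one
    _ = n := one_mul _

lemma sum_cinc_eq {k M : ℕ} {G : Finset (Sym2 (Fin n))} (hG : G.card = M) (S : Finset (Fin n)) :
    ∑ e ∈ G, cinc k S e = edgesIn G S - muP n M k := by
  simp only [cinc, sum_sub_distrib, ← edgesIn_eq, sum_const, hG, nsmul_eq_mul, muP]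
  ring

lemma Pru_eq_Exu {α : Type*} (Ω : Finset α) (P : α → Prop) :
    Pru Ω P = Exu Ω (fun a => if P a then 1 else 0) := by
  simp [Pru, Exu, sum_boole]

/-- Convolution with a normal law of variance `v` moves mass by more than `r` only with Gaussian
tail probability, so the distribution function of `e(S)` lies below the smoothed one shifted by
`r`, up to that tail. -/
lemma Pru_le_smooth {k M : ℕ} (hk : k ≤ n) {G : Finset (Sym2 (Fin n))} (hG : G.card = M)
    {v r : ℝ} (hr : 0 ≤ r) (z : ℝ) :
    Pru (kSets n k) (fun S => (edgesIn G S : ℝ) ≤ z)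
      ≤ smoothCdf k v (z - muP n M k + r) G + Real.exp (-(r / √v) ^ 2 / 2) := by
  have hne : (kSets n k).Nonempty := by
    rw [kSets, powersetCard_nonempty]; simpa using hk
  rw [Pru_eq_Exu, smoothCdf, ← Exu_const hne (Real.exp (-(r / √v) ^ 2 / 2)), ← Exu_add]
  refine Exu_mono fun S _ => ?_
  rw [sum_cinc_eq hG]
  split_ifs with h
  · have h1 : r / √v ≤ (z - muP n M k + r - (edgesIn G S - muP n M k)) / √v := by
      gcongr
      linarith
    have h2 := one_sub_Phi_le (x := r / √v) (by positivity)
    linarith [Phi_mono h1]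
  · have := Phi_nonneg ((z - muP n M k + r - (edgesIn G S - muP n M k)) / √v)
    positivity

/-- The lower counterpart of `Pru_le_smooth`. -/
lemma smooth_le_Pru {k M : ℕ} (hk : k ≤ n) {G : Finset (Sym2 (Fin n))} (hG : G.card = M)
    {v r : ℝ} (hr : 0 ≤ r) (z : ℝ) :
    smoothCdf k v (z - muP n M k - r) G
      ≤ Pru (kSets n k) (fun S => (edgesIn G S : ℝ) ≤ z) + Real.exp (-(r / √v) ^ 2 / 2) := by
  have hne : (kSets n k).Nonempty := by
    rw [kSets, powersetCard_nonempty]; simpa using hk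
  rw [Pru_eq_Exu, smoothCdf, ← Exu_const hne (Real.exp (-(r / √v) ^ 2 / 2)), ← Exu_add]
  refine Exu_mono fun S _ => ?_
  rw [sum_cinc_eq hG]
  split_ifs with h
  · have := Phi_le_one ((z - muP n M k - r - (edgesIn G S - muP n M k)) / √v)
    have := Real.exp_pos (-(r / √v) ^ 2 / 2)
    linarith
  · have h1 : (z - muP n M k - r - (edgesIn G S - muP n M k)) / √v ≤ -(r / √v) := by
      rw [← neg_div]
      gcongr
      linarith
    have h2 := Phi_neg_le (x := r / √v) (by positivity)
    linarith [Phi_mono h1]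

lemma Phi_div_sqrt_sub_le {a b : ℝ} (ha : 0 < a) (hab : a ≤ b) (z : ℝ) :
    |Phi (z / √b) - Phi (z / √a)| ≤ (b - a) / a := by
  have h := Phi_var_lipschitz (z / √a) (τ := (b - a) / a) (div_nonneg (by linarith) ha.le)
  have h1 : z / √a / √(1 + (b - a) / a) = z / √b := by
    rw [div_div, ← Real.sqrt_mul ha.le]
    congr 2
    field_simp
    ring
  rwa [h1] at h

/-- Comparison at a single point `z`, for a graph whose smoothed distribution function is close to
its mean at `z - μ ± r`. -/
lemma cdf_bound_at {k M : ℕ} (hn : 2 ≤ n) (hk : k ≤ n) (hM : (M : ℝ) ≤ Nr n) {v : ℝ} (hv : n ≤ v)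
    (ha : 0 < lamP n M k * (n : ℝ) ^ 2) {r t : ℝ} (hr : 0 ≤ r)
    {G : Finset (Sym2 (Fin n))} (hG : G.card = M) (z : ℝ)
    (h1 : |smoothCdf k v (z - muP n M k + r) G - bexp (M / Nr n) (completeEdges n)
      (smoothCdf k v (z - muP n M k + r))| ≤ t)
    (h2 : |smoothCdf k v (z - muP n M k - r) G - bexp (M / Nr n) (completeEdges n)
      (smoothCdf k v (z - muP n M k - r))| ≤ t) :
    |Pru (kSets n k) (fun S => (edgesIn G S : ℝ) ≤ z)
        - Phi ((z - muP n M k) / √(lamP n M k * (n : ℝ) ^ 2))|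
      ≤ t + Nr n * (2 / (√v) ^ 3) + 2 * v / (lamP n M k * (n : ℝ) ^ 2)
        + r / √(lamP n M k * (n : ℝ) ^ 2) + Real.exp (-(r / √v) ^ 2 / 2) := by
  have hn' : (2 : ℝ) ≤ n := by exact_mod_cast hn
  have hN : 0 < Nr n := by
    have h3 : (0 : ℝ) < n - 1 := by linarith
    unfold Nr
    positivity
  have hp0 : 0 ≤ M / Nr n := by positivity
  have hp1 : M / Nr n ≤ 1 := div_le_one_of_le₀ hM hN.le
  have hvar := abs_le.1 (variance_approx hn hk hM)
  set a := lamP n M k * (n : ℝ) ^ 2 with ha'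
  set b := v + (M / Nr n) * (1 - M / Nr n) * (Kr k * (1 - Kr k / Nr n)) with hb
  set m := muP n M k
  have hab : a ≤ b := by linarith
  have hba : (b - a) / a ≤ 2 * v / a := by gcongr; linarith
  have hs : 0 < √a := Real.sqrt_pos.2 ha
  have key : ∀ y, |smoothCdf k v y G - bexp (M / Nr n) (completeEdges n) (smoothCdf k v y)| ≤ t →
      |smoothCdf k v y G - Phi (y / √a)| ≤ t + Nr n * (2 / (√v) ^ 3) + 2 * v / a := by
    intro y hy
    have h3 := mean_smoothCdf (n := n) hn hk hp0 hp1 (v := v) (by linarith) y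
    have h4 := (Phi_div_sqrt_sub_le ha hab y).trans hba
    rw [abs_le] at *
    constructor <;> linarith [h3.1, h3.2, h4.1, h4.2, hy.1, hy.2]
  have k1 := abs_le.1 (key _ h1)
  have k2 := abs_le.1 (key _ h2)
  have l1 := Phi_lipschitz ((z - m + r) / √a) ((z - m) / √a)
  have l2 := Phi_lipschitz ((z - m - r) / √a) ((z - m) / √a)
  have e1 : (z - m + r) / √a - (z - m) / √a = r / √a := by ring
  have e2 : (z - m - r) / √a - (z - m) / √a = -(r / √a) := by ring
  have hrs : 0 ≤ r / √a := by positivity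
  rw [e1, abs_of_nonneg hrs, abs_le] at l1
  rw [e2, abs_neg, abs_of_nonneg hrs, abs_le] at l2
  have u1 := Pru_le_smooth hk hG (v := v) hr z
  have u2 := smooth_le_Pru hk hG (v := v) hr z
  rw [abs_le]
  constructor <;> linarith [k1.1, k1.2, k2.1, k2.2, l1.1, l1.2, l2.1, l2.2]

/-- Since `e(S)` takes values in `{0, …, M}`, comparison of the distribution functions at the
integers `-1, …, M` controls all real `z`, at the cost of one unit of Gaussian oscillation. -/
lemma cdf_bound_all {k M : ℕ} (hk : k ≤ n) {a E : ℝ}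
    {G : Finset (Sym2 (Fin n))} (hG : G.card = M)
    (h : ∀ j ∈ Finset.Icc (-1 : ℤ) M, |Pru (kSets n k) (fun S => (edgesIn G S : ℝ) ≤ j)
        - Phi (((j : ℝ) - muP n M k) / √a)| ≤ E) (z : ℝ) :
    |Pru (kSets n k) (fun S => (edgesIn G S : ℝ) ≤ z) - Phi ((z - muP n M k) / √a)|
      ≤ E + 1 / √a := by
  have hne : (kSets n k).Nonempty := by
    rw [kSets, powersetCard_nonempty]; simpa using hk
  have hs : 0 ≤ 1 / √a := by positivity
  have hneg : ∀ y : ℝ, y < 0 → Pru (kSets n k) (fun S => (edgesIn G S : ℝ) ≤ y) = 0 := by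
    intro y hy
    rw [Pru_eq_Exu]
    refine Eq.trans ?_ (Exu_const hne 0)
    congr 1
    funext S
    rw [if_neg]
    have : (0 : ℝ) ≤ edgesIn G S := by positivity
    linarith
  have hbig : ∀ y : ℝ, M ≤ y → Pru (kSets n k) (fun S => (edgesIn G S : ℝ) ≤ y) = 1 := by
    intro y hy
    rw [Pru_eq_Exu]
    refine Eq.trans ?_ (Exu_const hne 1)
    congr 1
    funext S
    rw [if_pos]
    have h1 : edgesIn G S ≤ M := by
      rw [← hG]
      unfold edgesIn
      exact card_filter_le _ _
    have : (edgesIn G S : ℝ) ≤ M := by exact_mod_cast h1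
    linarith
  rcases lt_or_ge z (-1) with hz | hz
  · have h1 := h (-1) (by simp)
    rw [hneg _ (by norm_num)] at h1
    rw [hneg z (by linarith)]
    have h2 : Phi ((z - muP n M k) / √a) ≤ Phi ((((-1 : ℤ) : ℝ) - muP n M k) / √a) := by
      refine Phi_mono ?_
      gcongr
      push_cast
      linarith
    have h3 := Phi_nonneg ((z - muP n M k) / √a)
    rw [abs_le] at *
    constructor <;> linarith [h1.1, h1.2]
  rcases le_or_gt (M : ℝ) z with hz2 | hz2
  · have h1 := h M (by simp)
    rw [hbig _ (by simp)] at h1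
    rw [hbig z hz2]
    have h2 : Phi ((((M : ℤ) : ℝ) - muP n M k) / √a) ≤ Phi ((z - muP n M k) / √a) := by
      refine Phi_mono ?_
      gcongr
      push_cast
      linarith
    have h3 := Phi_le_one ((z - muP n M k) / √a)
    rw [abs_le] at *
    constructor <;> linarith [h1.1, h1.2]
  · have h1 := h ⌊z⌋ (by
      rw [Finset.mem_Icc]
      refine ⟨Int.le_floor.2 (by push_cast; linarith), ?_⟩
      have : (⌊z⌋ : ℝ) ≤ (M : ℤ) := (Int.floor_le z).trans (by push_cast; linarith)
      exact_mod_cast this)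
    have h2 : Pru (kSets n k) (fun S => (edgesIn G S : ℝ) ≤ z)
        = Pru (kSets n k) (fun S => (edgesIn G S : ℝ) ≤ (⌊z⌋ : ℝ)) := by
      congr 1
      funext S
      have h3 : (edgesIn G S : ℝ) ≤ z ↔ ((edgesIn G S : ℤ) : ℝ) ≤ z := by simp
      rw [eq_iff_iff, h3, ← Int.le_floor]
      constructor <;> intro h4 <;> exact_mod_cast h4
    have h3 := Phi_lipschitz ((z - muP n M k) / √a) (((⌊z⌋ : ℝ) - muP n M k) / √a)
    have h4 : |(z - muP n M k) / √a - ((⌊z⌋ : ℝ) - muP n M k) / √a| ≤ 1 / √a := by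
      have e1 : (z - muP n M k) / √a - ((⌊z⌋ : ℝ) - muP n M k) / √a = (z - ⌊z⌋) / √a := by ring
      have h5 := Int.floor_le z
      have h6 := Int.lt_floor_add_one z
      rw [e1, abs_of_nonneg (div_nonneg (by linarith) (Real.sqrt_nonneg _))]
      gcongr
      linarith
    have h5 := h3.trans h4
    rw [h2]
    rw [abs_le] at *
    constructor <;> linarith [h1.1, h1.2, h5.1, h5.2]

end Assembly

/-! ### Choice of parameters -/

lemma lamP_ge {n M k : ℕ} {δ : ℝ} (hδ : 0 < δ) (hn : 2 ≤ n)
    (h1 : δ ≤ (M : ℝ) / Nr n) (h2 : (M : ℝ) / Nr n ≤ 1 - δ)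
    (h3 : δ ≤ (k : ℝ) / n) (h4 : (k : ℝ) / n ≤ 1 - δ) : δ ^ 5 / 2 ≤ lamP n M k := by
  have hn' : (2 : ℝ) ≤ n := by exact_mod_cast hn
  have h5 : (0 : ℝ) < n - 1 := by linarith
  have hN : 0 < Nr n := by unfold Nr; positivity
  have he : lamP n M k = ((1 - k / n) * (1 + k / n) * ((k : ℝ) / n) ^ 2 / 2)
      * ((M / Nr n) * (1 - M / Nr n)) := by
    unfold lamP
    field_simp
    ring
  rw [he]
  set t := (k : ℝ) / n
  set p := (M : ℝ) / Nr n
  have ht : δ * 1 * δ ^ 2 / 2 ≤ (1 - t) * (1 + t) * t ^ 2 / 2 := by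
    gcongr
    · nlinarith
    · linarith
    · linarith
    · linarith
  have hp : δ * δ ≤ p * (1 - p) := mul_le_mul h1 (by linarith) hδ.le (by linarith)
  calc δ ^ 5 / 2 = (δ * 1 * δ ^ 2 / 2) * (δ * δ) := by ring
    _ ≤ _ := mul_le_mul ht hp (by positivity) (le_trans (by positivity) ht)

lemma eventually_large {ε : ℝ} (hε : 0 < ε) (C : ℝ) : ∃ n₀ : ℕ, ∀ n ≥ n₀,
    2 ≤ n ∧ C ≤ (n : ℝ) ^ (ε / 2) ∧ 16 * Real.log n ≤ (n : ℝ) ^ (ε / 2) := by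
  have hε2 : 0 < ε / 2 := by positivity
  have h1 : ∀ᶠ x : ℝ in Filter.atTop, C ≤ x ^ (ε / 2) :=
    (tendsto_rpow_atTop hε2).eventually_ge_atTop C
  have h2 : ∀ᶠ x : ℝ in Filter.atTop, ‖Real.log x‖ ≤ (1 / 16) * ‖x ^ (ε / 2)‖ :=
    (isLittleO_log_rpow_atTop hε2).def (by norm_num)
  have h3 := (tendsto_natCast_atTop_atTop (R := ℝ)).eventually (h1.and h2)
  obtain ⟨n₀, hn₀⟩ := Filter.eventually_atTop.1 (h3.and (Filter.eventually_ge_atTop 2))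
  refine ⟨n₀, fun n hn => ?_⟩
  obtain ⟨⟨h4, h5⟩, h6⟩ := hn₀ n hn
  refine ⟨h6, h4, ?_⟩
  have h7 : ‖(n : ℝ) ^ (ε / 2)‖ = (n : ℝ) ^ (ε / 2) :=
    Real.norm_of_nonneg (by positivity)
  rw [h7] at h5
  linarith [(le_abs_self _).trans h5]

/-- The failure probability `O(n⁴ exp(-n^(ε/2)))` is at most `exp(-n^(ε/4))`. -/
lemma failure_bound {n : ℕ} {ε : ℝ} (hn : 2 ≤ n) (h1 : 16 ≤ (n : ℝ) ^ (ε / 2))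
    (h2 : 16 * Real.log n ≤ (n : ℝ) ^ (ε / 2)) {m : ℝ} (hm0 : 0 ≤ m)
    (hm : m ≤ 2 * (Nr n + 2)) :
    (Nr n + 1) * (m * (2 * Real.exp (2 - (n : ℝ) ^ (ε / 2)))) ≤ Real.exp (-(n : ℝ) ^ (ε / 4)) := by
  have hn' : (2 : ℝ) ≤ n := by exact_mod_cast hn
  have hn0 : (0 : ℝ) < n := by linarith
  have hN : Nr n + 2 ≤ n ^ 2 := by unfold Nr; nlinarith
  have hN0 := Nr_nonneg n
  have hy : (n : ℝ) ^ (ε / 2) = ((n : ℝ) ^ (ε / 4)) ^ 2 := by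
    rw [← Real.rpow_natCast, ← Real.rpow_mul hn0.le]
    congr 1
    push_cast
    ring
  have hy0 : 0 ≤ (n : ℝ) ^ (ε / 4) := by positivity
  set y := (n : ℝ) ^ (ε / 4)
  set x := (n : ℝ) ^ (ε / 2)
  have hyx : y ≤ x / 4 := by nlinarith
  have h4 : (4 : ℝ) ≤ Real.exp 2 := by
    have h5 := Real.add_one_le_exp (1 : ℝ)
    have h6 : Real.exp 2 = Real.exp 1 * Real.exp 1 := by rw [← Real.exp_add]; norm_num
    nlinarith
  have hlog : (n : ℝ) ^ 4 = Real.exp (4 * Real.log n) := by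
    rw [mul_comm, Real.exp_mul, Real.exp_log hn0]
    norm_cast
  calc (Nr n + 1) * (m * (2 * Real.exp (2 - x)))
      ≤ (n : ℝ) ^ 2 * ((2 * n ^ 2) * (2 * Real.exp (2 - x))) := by
        gcongr <;> linarith
    _ = 4 * (n : ℝ) ^ 4 * Real.exp (2 - x) := by ring
    _ ≤ Real.exp 2 * Real.exp (4 * Real.log n) * Real.exp (2 - x) := by
        rw [← hlog]
        gcongr
    _ = Real.exp (2 + 4 * Real.log n + (2 - x)) := by rw [Real.exp_add, Real.exp_add]
    _ ≤ Real.exp (-y) := Real.exp_le_exp.2 (by linarith)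

/-- The sum of all approximation errors is at most `n^(-1/4+ε)`. Smoothing at scale
`√v = n^(3/4)` balances the fluctuations `√(n/v)` against the de-smoothing error `√v/n`. -/
lemma error_bound {n : ℕ} {ε l c : ℝ} (hn : 2 ≤ n) (hc : 0 < c) (hl : c ≤ l)
    (hε : 0 < ε) (h1 : 5 + 2 / c + 2 / √c ≤ (n : ℝ) ^ (ε / 2))
    (h2 : 16 * Real.log n ≤ (n : ℝ) ^ (ε / 2)) :
    (n : ℝ) ^ (ε / 2) * √(9 * n / (n : ℝ) ^ (3 / 2 : ℝ))
      + Nr n * (2 / (√((n : ℝ) ^ (3 / 2 : ℝ))) ^ 3)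
      + 2 * (n : ℝ) ^ (3 / 2 : ℝ) / (l * (n : ℝ) ^ 2)
      + ((n : ℝ) ^ (ε / 2) * √((n : ℝ) ^ (3 / 2 : ℝ))) / √(l * (n : ℝ) ^ 2)
      + Real.exp (-(((n : ℝ) ^ (ε / 2) * √((n : ℝ) ^ (3 / 2 : ℝ))) / √((n : ℝ) ^ (3 / 2 : ℝ))) ^ 2 / 2)
      + 1 / √(l * (n : ℝ) ^ 2) ≤ (n : ℝ) ^ (-(1 / 4 : ℝ) + ε) := by
  have hn' : (2 : ℝ) ≤ n := by exact_mod_cast hn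
  have hn0 : (0 : ℝ) < n := by linarith
  have hlpos : 0 < l := by linarith
  set x := (n : ℝ) ^ (ε / 2) with hx
  set q := (n : ℝ) ^ (1 / 4 : ℝ) with hq
  have hq0 : 0 < q := by positivity
  have hq1 : 1 ≤ q := Real.one_le_rpow (by linarith) (by norm_num)
  have hq4 : (n : ℝ) = q ^ 4 := by
    rw [hq, ← Real.rpow_natCast, ← Real.rpow_mul hn0.le]; norm_num
  have hx1 : 1 ≤ x := Real.one_le_rpow (by linarith) (by positivity)
  have hv : (n : ℝ) ^ (3 / 2 : ℝ) = (q ^ 3) ^ 2 := by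
    rw [← pow_mul, hq, ← Real.rpow_natCast, ← Real.rpow_mul hn0.le]; norm_num
  have hgoal : (n : ℝ) ^ (-(1 / 4 : ℝ) + ε) = x * (x / q) := by
    rw [Real.rpow_add hn0, Real.rpow_neg hn0.le, ← hq]
    have : (n : ℝ) ^ ε = x * x := by rw [hx, ← Real.rpow_add hn0]; congr 1; ring
    rw [this]
    field_simp
  have hsv : √((n : ℝ) ^ (3 / 2 : ℝ)) = q ^ 3 := by rw [hv, Real.sqrt_sq (by positivity)]
  have hsa : √(l * (n : ℝ) ^ 2) = √l * n := by
    rw [Real.sqrt_mul hlpos.le, Real.sqrt_sq hn0.le]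
  have hsc : 0 < √c := Real.sqrt_pos.2 hc
  have hcl : √c ≤ √l := Real.sqrt_le_sqrt hl
  have hxq : 1 / q ≤ x / q := by gcongr
  have hxq0 : 0 ≤ x / q := by positivity
  have e1 : x * √(9 * n / (n : ℝ) ^ (3 / 2 : ℝ)) = 3 * (x / q) := by
    have : 9 * n / (n : ℝ) ^ (3 / 2 : ℝ) = (3 / q) ^ 2 := by
      rw [hv, hq4]; field_simp; norm_num
    rw [this, Real.sqrt_sq (by positivity)]
    ring
  have e2 : Nr n * (2 / (√((n : ℝ) ^ (3 / 2 : ℝ))) ^ 3) ≤ x / q := by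
    rw [hsv]
    have h3 : Nr n * 2 ≤ q ^ 8 := by
      have : (n : ℝ) ^ 2 = q ^ 8 := by rw [hq4]; ring
      rw [← this]
      unfold Nr
      nlinarith
    calc Nr n * (2 / (q ^ 3) ^ 3) = Nr n * 2 / q ^ 9 := by ring
      _ ≤ q ^ 8 / q ^ 9 := by gcongr
      _ = 1 / q := by field_simp
      _ ≤ x / q := hxq
  have e3 : 2 * (n : ℝ) ^ (3 / 2 : ℝ) / (l * (n : ℝ) ^ 2) ≤ 2 / c * (x / q) := by
    rw [hv, hq4]
    calc 2 * (q ^ 3) ^ 2 / (l * (q ^ 4) ^ 2) = 2 / l * (1 / q / q) := by field_simp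
      _ ≤ 2 / c * (x / q) := by
        have h3 : 1 / q / q ≤ x / q := (div_le_self (by positivity) hq1).trans hxq
        exact mul_le_mul (by gcongr) h3 (by positivity) (by positivity)
  have e4 : (x * √((n : ℝ) ^ (3 / 2 : ℝ))) / √(l * (n : ℝ) ^ 2) ≤ 1 / √c * (x / q) := by
    rw [hsv, hsa, hq4]
    calc x * q ^ 3 / (√l * q ^ 4) = 1 / √l * (x / q) := by
          have : 0 < √l := by linarith
          field_simp
      _ ≤ 1 / √c * (x / q) := by gcongr
  have e5 : Real.exp (-((x * √((n : ℝ) ^ (3 / 2 : ℝ))) / √((n : ℝ) ^ (3 / 2 : ℝ))) ^ 2 / 2)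
      ≤ x / q := by
    rw [hsv, mul_div_assoc, div_self (by positivity), mul_one]
    refine le_trans ?_ hxq
    have : 1 / q = Real.exp (-(Real.log n / 4)) := by
      rw [hq, Real.rpow_def_of_pos hn0, one_div, ← Real.exp_neg]
      congr 1
      ring
    rw [this, Real.exp_le_exp]
    nlinarith
  have e6 : 1 / √(l * (n : ℝ) ^ 2) ≤ 1 / √c * (x / q) := by
    rw [hsa, hq4]
    have hql : q ≤ q ^ 4 := le_self_pow₀ hq1 (by norm_num)
    calc 1 / (√l * q ^ 4) = 1 / √l * (1 / q ^ 4) := by ring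
      _ ≤ 1 / √c * (1 / q) := by gcongr
      _ ≤ 1 / √c * (x / q) := by gcongr
  rw [hgoal, e1]
  calc _ ≤ (5 + 2 / c + 2 / √c) * (x / q) := by
        have : (5 + 2 / c + 2 / √c) * (x / q) = 3 * (x / q) + x / q + 2 / c * (x / q)
          + 1 / √c * (x / q) + x / q + 1 / √c * (x / q) := by ring
        rw [this]
        linarith
    _ ≤ x * (x / q) := by gcongr

lemma Pru_compl_le {α : Type*} {Ω : Finset α} (hΩ : Ω.Nonempty) {P Q : α → Prop}
    (h : ∀ a ∈ Ω, ¬ Q a → P a) : 1 - Pru Ω Q ≤ Pru Ω P := by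
  classical
  rw [Pru_eq_Exu, Pru_eq_Exu, sub_le_iff_le_add, ← Exu_add]
  refine le_trans (le_of_eq (Exu_const hΩ 1).symm) (Exu_mono fun a ha => ?_)
  by_cases hQ : Q a
  · simp only [hQ, if_true]
    split_ifs <;> norm_num
  · simp [hQ, h a ha hQ]

/-- CLT for induced edge counts, Theorem 1.1.
For fixed `δ, ε > 0` there are `η > 0` and `n₀` such that for all `n ≥ n₀` and all `M, k`
with `M/N, k/n ∈ [δ, 1-δ]`, with probability at least `1 - exp(-n^η)` over `G = G_{n,M}`:
for all `z ∈ ℝ`, `|P_S(e(S) ≤ z) - P(Z ≤ z)| ≤ n^(-1/4+ε)`, where `S` is a uniform `k`-subset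
of `[n]` and `Z ~ N(K·M/N, λ·n²)`. -/
theorem stmt_0 (δ ε : ℝ) (hδ : 0 < δ) (hε : 0 < ε) :
    ∃ η > (0:ℝ), ∃ n₀ : ℕ, ∀ n ≥ n₀, ∀ M k : ℕ,
      δ ≤ (M : ℝ) / Nr n → (M : ℝ) / Nr n ≤ 1 - δ →
      δ ≤ (k : ℝ) / n → (k : ℝ) / n ≤ 1 - δ →
      PrGnM n M (fun G => ∀ z : ℝ,
          |Pru (kSets n k) (fun S => (edgesIn G S : ℝ) ≤ z) -
            gaussCdf (muP n M k) (lamP n M k * (n:ℝ) ^ 2) z|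
          ≤ (n : ℝ) ^ (-(1/4 : ℝ) + ε))
        ≥ 1 - Real.exp (-(n : ℝ) ^ η) := by
  classical
  -- `n` is large in terms of the lower bound `δ⁵/2` for `λ`, which enters the total error.
  obtain ⟨n₀, hn₀⟩ := eventually_large hε
    (max 16 (5 + 2 / (δ ^ 5 / 2) + 2 / √(δ ^ 5 / 2)))
  refine ⟨ε / 4, by positivity, n₀, fun n hnn M k hM1 hM2 hk1 hk2 => ?_⟩
  obtain ⟨hn, hC, hlog⟩ := hn₀ n hnn
  have hn' : (2 : ℝ) ≤ n := by exact_mod_cast hn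
  have hn0 : (0 : ℝ) < n := by linarith
  have hN : 0 < Nr n := by
    have h5 : (0 : ℝ) < n - 1 := by linarith
    unfold Nr
    positivity
  have hk : k ≤ n := by
    have : (k : ℝ) ≤ n := by
      rw [div_le_iff₀ hn0] at hk2
      nlinarith
    exact_mod_cast this
  have hM : (M : ℝ) ≤ Nr n := by
    rw [div_le_iff₀ hN] at hM2
    nlinarith
  have hlam := lamP_ge hδ hn hM1 hM2 hk1 hk2
  have hlam0 : 0 < lamP n M k := lt_of_lt_of_le (by positivity) hlam
  have ha : 0 < lamP n M k * (n : ℝ) ^ 2 := by positivity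
  set x := (n : ℝ) ^ (ε / 2) with hx
  set v := (n : ℝ) ^ (3 / 2 : ℝ) with hv
  have hvn : (n : ℝ) ≤ v := by
    conv_lhs => rw [← Real.rpow_one (n : ℝ)]
    exact Real.rpow_le_rpow_of_exponent_le (by linarith) (by norm_num)
  set r := x * √v with hr
  have hr0 : 0 ≤ r := by positivity
  -- The evaluation points: `j ± r` after centring, for the relevant integers `j`.
  set Z : Finset ℝ := (Finset.Icc (-1 : ℤ) M).image (fun j : ℤ => (j : ℝ) - muP n M k + r)
    ∪ (Finset.Icc (-1 : ℤ) M).image (fun j : ℤ => (j : ℝ) - muP n M k - r) with hZ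
  have hZcard : (Z.card : ℝ) ≤ 2 * (Nr n + 2) := by
    have h1 : Z.card ≤ 2 * (M + 2) := by
      refine (card_union_le _ _).trans ?_
      have hc : (Finset.Icc (-1 : ℤ) M).card = M + 2 := by
        rw [Int.card_Icc]
        omega
      have h2 := card_image_le (s := Finset.Icc (-1 : ℤ) M)
        (f := fun j : ℤ => (j : ℝ) - muP n M k + r)
      have h3 := card_image_le (s := Finset.Icc (-1 : ℤ) M)
        (f := fun j : ℤ => (j : ℝ) - muP n M k - r)
      omega
    have h2 : (Z.card : ℝ) ≤ 2 * (M + 2) := by exact_mod_cast h1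
    linarith
  have hbad := (slice_union hn hk hM hvn Z x).trans
    (failure_bound hn ((le_max_left _ _).trans hC) hlog (Nat.cast_nonneg _) hZcard)
  have hne : (graphsM n M).Nonempty := by
    rw [graphsM_eq, powersetCard_nonempty]
    rw [← card_completeEdges] at hM
    exact_mod_cast hM
  have herr := error_bound hn (by positivity) hlam hε ((le_max_right _ _).trans hC) hlog
  unfold PrGnM
  refine le_trans (sub_le_sub_left hbad 1) (Pru_compl_le hne fun G hG hgood z => ?_)
  have hGM : G.card = M := by
    rw [graphsM_eq, mem_powersetCard] at hG
    exact hG.2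
  push Not at hgood
  rw [gaussCdf_eq_Phi ha]
  refine (cdf_bound_all hk hGM (fun j hj => ?_) z).trans herr
  exact cdf_bound_at hn hk hM hvn ha hr0 hGM j
    (hgood _ (mem_union_left _ (mem_image_of_mem _ hj))).le
    (hgood _ (mem_union_right _ (mem_image_of_mem _ hj))).le
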